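/- For every δ with 0 < δ < 1/8 there exists n₀ such that for every integer n ≥ n₀ there exists a simple graph G on n vertices which is triangle-free (contains no clique of size 3) and whose independence number satisfies α(G) < (1+δ)·√((3/2)·n·log n). -/

import Mathlib

/-!
Let `L = log n`, let `k` be `√(3/2 * n * L)` rounded up, and take two independent random graphs with
edge probability `0.6 * L / k` on `m ≈ n ^ (1 - 1/4000)` points. Remove from each a maximal family
of edge-disjoint triangles and pull it back to the `n` vertices along one of two suitable maps,
keeping a pair only if its image in the other random graph has no common neighbour. The union of the
two pull-backs is triangle-free.

A `k`-set `I` that is independent in this graph contains almost no edge of either random graph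
between points without a common neighbour in the other. Recording only the neighbours of high weight
(the centers, of which there are few), this becomes a certificate: each graph contains prescribed
edges from points to centers, and has few edges among the pairs that share no center of the other
graph. Many shared centers require many prescribed edges, few leave many pairs open, and balancing
the two costs bounds the probability of a certificate by `exp (-c * k * L)` with `c > 1/2`, which
beats the at most `exp (k * (1 + L / 2))` choices of `I`.
-/

section RandomSubset

open Finset Real

variable {E : Type*} [Fintype E] [DecidableEq E] {p : ℝ}

/-- The probability that the random subset of `E` containing each element independently with
probability `p` (the `p`-random subset) is `S`. -/
noncomputable def bernWeight (p : ℝ) (S : Finset E) : ℝ := ∏ e, if e ∈ S then p else 1 - p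

/-- The expectation of `f` over the `p`-random subset of `E`, as a finite sum. -/
noncomputable def bernExp (p : ℝ) (f : Finset E → ℝ) : ℝ := ∑ S, bernWeight p S * f S

open Classical in
/-- The probability of the event `P` for the `p`-random subset of `E`. -/
noncomputable def bernProb (p : ℝ) (P : Finset E → Prop) : ℝ :=
  bernExp p fun S => if P S then 1 else 0

theorem bernWeight_nonneg (hp : p ∈ Set.Icc 0 1) (S : Finset E) : 0 ≤ bernWeight p S :=
  prod_nonneg fun e _ => by split_ifs <;> linarith [hp.1, hp.2]

theorem bernExp_prod (p : ℝ) (x y : E → ℝ) :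
    bernExp p (fun S => ∏ e, if e ∈ S then x e else y e) = ∏ e, (p * x e + (1 - p) * y e) := by
  rw [bernExp, prod_add, powerset_univ]
  refine sum_congr rfl fun S _ => ?_
  rw [bernWeight, ← prod_mul_distrib, ← Fintype.prod_ite_mem S, ← Fintype.prod_ite_mem (univ \ S),
    ← prod_mul_distrib]
  refine prod_congr rfl fun e _ => ?_
  by_cases he : e ∈ S <;> simp [he]

theorem bernExp_const (p c : ℝ) : bernExp p (fun _ : Finset E => c) = c := by
  have sum_weight : bernExp p (fun _ : Finset E => 1) = 1 := by
    simpa using bernExp_prod (E := E) p (fun _ => 1) fun _ => 1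
  simp only [bernExp, mul_one] at sum_weight ⊢
  rw [← sum_mul, sum_weight, one_mul]

theorem bernExp_mono (hp : p ∈ Set.Icc 0 1) {f g : Finset E → ℝ} (h : ∀ S, f S ≤ g S) :
    bernExp p f ≤ bernExp p g :=
  sum_le_sum fun S _ => mul_le_mul_of_nonneg_left (h S) (bernWeight_nonneg hp S)

theorem bernExp_nonneg (hp : p ∈ Set.Icc 0 1) {f : Finset E → ℝ} (h : ∀ S, 0 ≤ f S) :
    0 ≤ bernExp p f :=
  sum_nonneg fun S _ => mul_nonneg (bernWeight_nonneg hp S) (h S)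

theorem bernExp_add (p : ℝ) (f g : Finset E → ℝ) :
    bernExp p (fun S => f S + g S) = bernExp p f + bernExp p g := by
  simp only [bernExp, mul_add, sum_add_distrib]

theorem bernExp_const_mul (p c : ℝ) (f : Finset E → ℝ) :
    bernExp p (fun S => c * f S) = c * bernExp p f := by
  simp only [bernExp, mul_sum, mul_left_comm]

theorem bernExp_sum {ι : Type*} (p : ℝ) (s : Finset ι) (f : ι → Finset E → ℝ) :
    bernExp p (fun S => ∑ i ∈ s, f i S) = ∑ i ∈ s, bernExp p (f i) := by
  simp only [bernExp, mul_sum]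
  exact sum_comm

theorem bernExp_subset_mul_pow (p c : ℝ) {T O : Finset E} (hTO : Disjoint T O) :
    bernExp p (fun S => (if T ⊆ S then 1 else 0) * c ^ #(S ∩ O)) =
      p ^ #T * (1 - p + p * c) ^ #O := by
  have as_product (S : Finset E) : (if T ⊆ S then 1 else 0) * c ^ #(S ∩ O) =
      ∏ e, if e ∈ S then (if e ∈ O then c else 1) else (if e ∈ T then 0 else 1) := by
    have split (e : E) :
        (if e ∈ S then (if e ∈ O then c else 1) else (if e ∈ T then (0 : ℝ) else 1)) =
          (if e ∈ T → e ∈ S then 1 else 0) * (if e ∈ S ∩ O then c else 1) := by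
      by_cases hS : e ∈ S <;> by_cases hT : e ∈ T <;> by_cases hO : e ∈ O <;> simp [hS, hT, hO]
    simp only [split, prod_mul_distrib, prod_ite_mem, univ_inter, prod_const, prod_ite_zero,
      one_pow, mem_univ, forall_const, subset_iff]
  have factor (e : E) :
      p * (if e ∈ O then c else 1) + (1 - p) * (if e ∈ T then 0 else 1) =
        (if e ∈ T then p else 1) * (if e ∈ O then 1 - p + p * c else 1) := by
    by_cases hT : e ∈ T
    · simp [hT, disjoint_left.1 hTO hT]
    · by_cases hO : e ∈ O <;> simp [hT, hO, add_comm]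
  simp only [as_product, bernExp_prod, factor, prod_mul_distrib, prod_ite_mem, univ_inter,
    prod_const]

theorem bernProb_nonneg (hp : p ∈ Set.Icc 0 1) (P : Finset E → Prop) : 0 ≤ bernProb p P :=
  bernExp_nonneg hp fun S => by split_ifs <;> norm_num

theorem bernProb_le_bernExp (hp : p ∈ Set.Icc 0 1) {P : Finset E → Prop} {f : Finset E → ℝ}
    (hf : ∀ S, 0 ≤ f S) (h : ∀ S, P S → 1 ≤ f S) : bernProb p P ≤ bernExp p f :=
  bernExp_mono hp fun S => by
    split_ifs with hS
    · exact h S hS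
    · exact hf S

theorem bernProb_mono (hp : p ∈ Set.Icc 0 1) {P Q : Finset E → Prop} (h : ∀ S, P S → Q S) :
    bernProb p P ≤ bernProb p Q :=
  bernProb_le_bernExp hp (fun S => by split_ifs <;> norm_num) fun S hS => by rw [if_pos (h S hS)]

theorem bernProb_exists_le (hp : p ∈ Set.Icc 0 1) {ι : Type*} (s : Finset ι)
    (P : ι → Finset E → Prop) :
    bernProb p (fun S => ∃ i ∈ s, P i S) ≤ ∑ i ∈ s, bernProb p (P i) := by
  classical
  have indicator_nonneg (S : Finset E) (i : ι) : (0 : ℝ) ≤ if P i S then 1 else 0 := by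
    split_ifs <;> norm_num
  simp only [bernProb, ← bernExp_sum]
  refine bernProb_le_bernExp hp (fun S => sum_nonneg fun i _ => indicator_nonneg S i) ?_
  rintro S ⟨i, hi, hS⟩
  exact (if_pos hS).ge.trans (single_le_sum (fun i _ => indicator_nonneg S i) hi)

theorem bernProb_or_le (hp : p ∈ Set.Icc 0 1) (P Q : Finset E → Prop) :
    bernProb p (fun S => P S ∨ Q S) ≤ bernProb p P + bernProb p Q := by
  simp only [bernProb, ← bernExp_add]
  refine bernExp_mono hp fun S => ?_
  by_cases hP : P S <;> by_cases hQ : Q S <;> simp [hP, hQ]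

theorem bernProb_subset (p : ℝ) (T : Finset E) : bernProb p (fun S => T ⊆ S) = p ^ #T := by
  have h := bernExp_subset_mul_pow p 1 (disjoint_empty_right T)
  simp only [one_pow, mul_one, card_empty, pow_zero] at h
  rw [← h, bernProb]
  congr! 3

theorem one_sub_add_mul_exp_pow_le (hp : p ∈ Set.Icc 0 1) (t : ℝ) (N : ℕ) :
    (1 - p + p * exp t) ^ N ≤ exp (p * (exp t - 1) * N) := by
  have h : 1 - p + p * exp t ≤ exp (p * (exp t - 1)) := by
    linarith [add_one_le_exp (p * (exp t - 1))]
  have h0 : 0 ≤ 1 - p + p * exp t := by nlinarith [hp.1, hp.2, exp_pos t]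
  calc (1 - p + p * exp t) ^ N ≤ exp (p * (exp t - 1)) ^ N := pow_le_pow_left₀ h0 h N
    _ = exp (p * (exp t - 1) * N) := by rw [← exp_nat_mul, mul_comm]

theorem bernProb_le_card_inter (hp : p ∈ Set.Icc 0 1) {l : ℝ} (hl : 0 ≤ l) (O : Finset E)
    (d : ℝ) :
    bernProb p (fun S => d ≤ (#(S ∩ O) : ℝ)) ≤ exp (-(l * d) + p * (exp l - 1) * #O) := by
  have h := bernExp_subset_mul_pow p (exp l) (disjoint_empty_left O)
  simp only [empty_subset, if_true, one_mul, card_empty, pow_zero] at h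
  calc bernProb p (fun S => d ≤ (#(S ∩ O) : ℝ))
      ≤ bernExp p (fun S => exp (-(l * d)) * exp l ^ #(S ∩ O)) := by
        refine bernProb_le_bernExp hp (fun S => by positivity) fun S hS => ?_
        rw [← exp_nat_mul, ← exp_add]
        exact one_le_exp (by nlinarith [mul_le_mul_of_nonneg_left hS hl])
    _ = exp (-(l * d)) * (1 - p + p * exp l) ^ #O := by rw [bernExp_const_mul, h]
    _ ≤ exp (-(l * d)) * exp (p * (exp l - 1) * #O) := by
        gcongr
        exact one_sub_add_mul_exp_pow_le hp l _
    _ = _ := (exp_add _ _).symm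

theorem bernProb_subset_and_card_inter_le (hp : p ∈ Set.Icc 0 1) {l : ℝ} (hl : 0 ≤ l)
    {T O : Finset E} (hTO : Disjoint T O) (j : ℝ) :
    bernProb p (fun S => T ⊆ S ∧ (#(S ∩ O) : ℝ) ≤ j) ≤
      p ^ #T * exp (l * j - p * (1 - exp (-l)) * #O) := by
  calc bernProb p (fun S => T ⊆ S ∧ (#(S ∩ O) : ℝ) ≤ j)
      ≤ bernExp p (fun S => exp (l * j) *
          ((if T ⊆ S then 1 else 0) * exp (-l) ^ #(S ∩ O))) := by
        refine bernProb_le_bernExp hp (fun S => by split_ifs <;> positivity) fun S hS => ?_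
        rw [if_pos hS.1, one_mul, ← exp_nat_mul, ← exp_add]
        exact one_le_exp (by nlinarith [mul_le_mul_of_nonneg_left hS.2 hl])
    _ = exp (l * j) * (p ^ #T * (1 - p + p * exp (-l)) ^ #O) := by
        rw [bernExp_const_mul, bernExp_subset_mul_pow p _ hTO]
    _ ≤ exp (l * j) * (p ^ #T * exp (p * (exp (-l) - 1) * #O)) := by
        have := hp.1
        gcongr
        exact one_sub_add_mul_exp_pow_le hp (-l) _
    _ = _ := by
        rw [mul_left_comm, ← exp_add]
        ring_nf

/-- The pair `(S, S')` with the parts of `S` and `S'` outside `T` exchanged. -/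
def exchangeOutside (T : Finset E) (q : Finset E × Finset E) : Finset E × Finset E :=
  (q.1 ∩ T ∪ q.2 \ T, q.2 ∩ T ∪ q.1 \ T)

omit [Fintype E] in
theorem exchangeOutside_involutive (T : Finset E) : (exchangeOutside T).Involutive := by
  rintro ⟨S, S'⟩
  simp only [exchangeOutside, Prod.mk.injEq]
  constructor <;> ext e <;> simp only [mem_union, mem_inter, mem_sdiff] <;> tauto

theorem bernWeight_exchangeOutside (p : ℝ) (T : Finset E) (q : Finset E × Finset E) :
    bernWeight p (exchangeOutside T q).1 * bernWeight p (exchangeOutside T q).2 =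
      bernWeight p q.1 * bernWeight p q.2 := by
  simp only [bernWeight, ← prod_mul_distrib]
  refine prod_congr rfl fun e _ => ?_
  by_cases he : e ∈ T
  · simp [exchangeOutside, he]
  · simp [exchangeOutside, he, mul_comm]

-- Exchanging the parts outside `T` preserves the law of a pair of independent random subsets and
-- turns `f S * g S'` into `f S * g S`.
theorem bernExp_mul_of_disjoint (p : ℝ) (T : Finset E) {f g : Finset E → ℝ}
    (hf : ∀ S, f S = f (S ∩ T)) (hg : ∀ S, g S = g (S \ T)) :
    bernExp p (fun S => f S * g S) = bernExp p f * bernExp p g := by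
  set w : Finset E × Finset E → ℝ := fun q => bernWeight p q.1 * bernWeight p q.2 with hw
  have exchanged (q : Finset E × Finset E) :
      w (exchangeOutside T q) * (f (exchangeOutside T q).1 * g (exchangeOutside T q).1) =
        w q * (f q.1 * g q.2) := by
    have inter_eq : (exchangeOutside T q).1 ∩ T = q.1 ∩ T := by
      ext e; simp only [exchangeOutside, mem_union, mem_inter, mem_sdiff]; tauto
    have sdiff_eq : (exchangeOutside T q).1 \ T = q.2 \ T := by
      ext e; simp only [exchangeOutside, mem_union, mem_inter, mem_sdiff]; tauto
    rw [hf, hg, inter_eq, sdiff_eq, ← hf, ← hg]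
    exact congrArg (· * _) (bernWeight_exchangeOutside p T q)
  calc bernExp p (fun S => f S * g S)
      = bernExp p (fun S => f S * g S) * bernExp p (fun _ : Finset E => 1) := by
        rw [bernExp_const, mul_one]
    _ = ∑ q, w q * (f q.1 * g q.1) := by
        simp only [bernExp, sum_mul_sum, Fintype.sum_prod_type, hw]
        exact sum_congr rfl fun S _ => sum_congr rfl fun S' _ => by ring
    _ = ∑ q, w q * (f q.1 * g q.2) := by
        rw [← Equiv.sum_comp (exchangeOutside_involutive T).toPerm]
        exact sum_congr rfl fun q _ => exchanged q
    _ = bernExp p f * bernExp p g := by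
        simp only [bernExp, sum_mul_sum, Fintype.sum_prod_type, hw]
        exact sum_congr rfl fun S _ => sum_congr rfl fun S' _ => by ring

/-- The probability of the event `P` for two independent `p`-random subsets of `E`. -/
noncomputable def pairProb (p : ℝ) (P : Finset E → Finset E → Prop) : ℝ :=
  bernExp p fun S => bernProb p (P S)

theorem pairProb_mono (hp : p ∈ Set.Icc 0 1) {P Q : Finset E → Finset E → Prop}
    (h : ∀ S S', P S S' → Q S S') : pairProb p P ≤ pairProb p Q :=
  bernExp_mono hp fun S => bernProb_mono hp (h S)

theorem pairProb_swap (p : ℝ) (P : Finset E → Finset E → Prop) :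
    pairProb p (fun S S' => P S' S) = pairProb p P := by
  simp only [pairProb, bernProb, bernExp, mul_sum]
  rw [sum_comm]
  exact sum_congr rfl fun S _ => sum_congr rfl fun S' _ => mul_left_comm _ _ _

theorem pairProb_exists_le (hp : p ∈ Set.Icc 0 1) {ι : Type*} (s : Finset ι)
    (P : ι → Finset E → Finset E → Prop) :
    pairProb p (fun S S' => ∃ i ∈ s, P i S S') ≤ ∑ i ∈ s, pairProb p (P i) := by
  simp only [pairProb, ← bernExp_sum]
  exact bernExp_mono hp fun S => bernProb_exists_le hp s fun i => P i S

theorem pairProb_or_le (hp : p ∈ Set.Icc 0 1) (P Q : Finset E → Finset E → Prop) :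
    pairProb p (fun S S' => P S S' ∨ Q S S') ≤ pairProb p P + pairProb p Q := by
  simp only [pairProb, ← bernExp_add]
  exact bernExp_mono hp fun S => bernProb_or_le hp (P S) (Q S)

theorem pairProb_and (p : ℝ) (P Q : Finset E → Prop) :
    pairProb p (fun S S' => P S ∧ Q S') = bernProb p P * bernProb p Q := by
  rw [pairProb, mul_comm, bernProb.eq_1 p P, ← bernExp_const_mul]
  congr 1
  ext S
  by_cases hS : P S
  · simp [hS]
  · simp [hS, bernProb, bernExp_const]

theorem pairProb_le_of_forall_left (hp : p ∈ Set.Icc 0 1) {c : ℝ}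
    {P : Finset E → Finset E → Prop} (h : ∀ S, bernProb p (P S) ≤ c) : pairProb p P ≤ c :=
  (bernExp_mono hp h).trans_eq (bernExp_const p c)

theorem pairProb_le_of_forall_right (hp : p ∈ Set.Icc 0 1) {c : ℝ}
    {P : Finset E → Finset E → Prop} (h : ∀ S', bernProb p (fun S => P S S') ≤ c) :
    pairProb p P ≤ c := by
  rw [← pairProb_swap]
  exact pairProb_le_of_forall_left hp h

theorem exists_not_of_pairProb_lt_one {P : Finset E → Finset E → Prop} (h : pairProb p P < 1) :
    ∃ S S', ¬ P S S' := by
  by_contra! hP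
  simp [pairProb, bernProb, hP, bernExp_const] at h

end RandomSubset

section RandomMaps

open Finset Real

variable {V X : Type*} [DecidableEq X]

/-- The number of points that a set `I` loses under the map `a`. -/
def imageDefect (a : V → X) (I : Finset V) : ℕ := #I - #(I.image a)

variable [DecidableEq V]

theorem imageDefect_insert_update (a : V → X) {I : Finset V} {v : V} (hv : v ∉ I) (x : X) :
    imageDefect (Function.update a v x) (insert v I) =
      imageDefect a I + if x ∈ I.image a then 1 else 0 := by
  have image_eq : I.image (Function.update a v x) = I.image a :=
    image_congr fun u hu => Function.update_of_ne (ne_of_mem_of_not_mem hu hv) _ _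
  have hle : #(I.image a) ≤ #I := card_image_le
  rw [imageDefect, imageDefect, card_insert_of_notMem hv, image_insert, image_eq,
    Function.update_self]
  split_ifs with hx
  · rw [insert_eq_of_mem hx, Nat.sub_add_comm hle]
  · rw [card_insert_of_notMem hx, Nat.add_sub_add_right, add_zero]

variable [Fintype X]

theorem sum_pow_imageDefect_update_le {c : ℝ} (hc : 0 ≤ c) {a : V → X} {I : Finset V} {v : V}
    (hv : v ∉ I) (hcI : c * #I ≤ Fintype.card X) :
    ∑ x, c ^ imageDefect (Function.update a v x) (insert v I) ≤
      c ^ imageDefect a I * (2 * Fintype.card X) := by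
  have image_le : c * #(I.image a) ≤ c * #I := by gcongr; exact card_image_le
  have term_le (x : X) : c ^ (if x ∈ I.image a then 1 else 0) ≤
      (if x ∈ I.image a then c else 0) + 1 := by
    split_ifs <;> simp
  simp only [imageDefect_insert_update a hv, pow_add, ← mul_sum]
  refine mul_le_mul_of_nonneg_left ((sum_le_sum fun x _ => term_le x).trans ?_) (by positivity)
  rw [sum_add_distrib, sum_ite_mem, univ_inter, sum_const, nsmul_eq_mul, sum_const, card_univ,
    nsmul_eq_mul, mul_one]
  linarith

variable [Fintype V]

omit [DecidableEq X] in
theorem sum_fun_update (v : V) (f : (V → X) → ℝ) :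
    ∑ a, ∑ x, f (Function.update a v x) = Fintype.card X * ∑ a, f a := by
  have swap_involutive : Function.Involutive
      (fun q : (V → X) × X => (Function.update q.1 v q.2, q.1 v)) := by
    rintro ⟨a, x⟩; simp
  have h := Equiv.sum_comp swap_involutive.toPerm (fun q : (V → X) × X => f q.1)
  simp only [Function.Involutive.coe_toPerm, Fintype.sum_prod_type] at h
  simp only [h, sum_const, card_univ, nsmul_eq_mul, mul_sum]

theorem sum_pow_imageDefect_le {c : ℝ} (hc : 0 ≤ c) (I : Finset V)
    (hcI : c * #I ≤ Fintype.card X) :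
    ∑ a : V → X, c ^ imageDefect a I ≤ 2 ^ #I * (Fintype.card X : ℝ) ^ Fintype.card V := by
  induction I using Finset.induction_on with
  | empty => simp [imageDefect]
  | insert v I hv ih =>
    have hcI' : c * (#I + 1) ≤ Fintype.card X := by
      simpa only [card_insert_of_notMem hv, Nat.cast_add_one] using hcI
    have hcI₀ : c * #I ≤ Fintype.card X := by linarith
    rcases isEmpty_or_nonempty X with hX | hX
    · have : Nonempty V := ⟨v⟩
      simp
    refine le_of_mul_le_mul_left ?_ (Nat.cast_pos.2 (Fintype.card_pos (α := X)))
    calc (Fintype.card X : ℝ) * ∑ a : V → X, c ^ imageDefect a (insert v I)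
        = ∑ a : V → X, ∑ x, c ^ imageDefect (Function.update a v x) (insert v I) :=
          (sum_fun_update v fun a => c ^ imageDefect a (insert v I)).symm
      _ ≤ ∑ a : V → X, c ^ imageDefect a I * (2 * Fintype.card X) :=
          sum_le_sum fun a _ => sum_pow_imageDefect_update_le hc hv hcI₀
      _ ≤ 2 ^ #I * (Fintype.card X : ℝ) ^ Fintype.card V * (2 * Fintype.card X) := by
          rw [← sum_mul]
          gcongr
          exact ih hcI₀
      _ = _ := by rw [card_insert_of_notMem hv]; ring

theorem sum_exp_card_fiber (x : X) (t : ℝ) :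
    ∑ a : V → X, exp (t * #{v | a v = x}) = (Fintype.card X - 1 + exp t) ^ Fintype.card V := by
  have sum_point : ∑ y : X, (if y = x then exp t else 1) = Fintype.card X - 1 + exp t := by
    rw [← add_sum_erase _ _ (mem_univ x), if_pos rfl,
      sum_congr rfl fun y hy => if_neg (ne_of_mem_erase hy), sum_const,
      card_erase_of_mem (mem_univ x), card_univ, nsmul_eq_mul, mul_one,
      Nat.cast_pred (Fintype.card_pos_iff.2 ⟨x⟩), add_comm]
  have h := prod_univ_sum (fun _ : V => (univ : Finset X)) fun _ y => if y = x then exp t else 1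
  rw [sum_point, prod_const, card_univ, Fintype.piFinset_univ] at h
  rw [h]
  refine sum_congr rfl fun a _ => ?_
  rw [prod_ite, prod_const, prod_const_one, mul_one, ← exp_nat_mul, mul_comm]

theorem card_large_fiber_le {t : ℝ} (ht : 0 ≤ t) (F : ℝ) (x : X) :
    (#{a : V → X | F ≤ (#{v | a v = x} : ℝ)} : ℝ) ≤ (Fintype.card X : ℝ) ^ Fintype.card V *
      exp (-(t * F) + (exp t - 1) * Fintype.card V / Fintype.card X) := by
  set m : ℝ := (Fintype.card X : ℝ)
  set n := Fintype.card V
  have hm : 1 ≤ m := Nat.one_le_cast.2 (Fintype.card_pos_iff.2 ⟨x⟩)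
  have markov : (#{a : V → X | F ≤ (#{v | a v = x} : ℝ)} : ℝ) * exp (t * F) ≤
      (m - 1 + exp t) ^ n := by
    rw [← sum_exp_card_fiber, ← nsmul_eq_mul, ← sum_const]
    exact (sum_le_sum fun a ha =>
      exp_le_exp.2 (mul_le_mul_of_nonneg_left (mem_filter.1 ha).2 ht)).trans
      (sum_le_sum_of_subset_of_nonneg (filter_subset _ _) fun _ _ _ => exp_nonneg _)
  have base_le : m - 1 + exp t ≤ m * exp ((exp t - 1) / m) := by
    calc m - 1 + exp t = m * ((exp t - 1) / m + 1) := by field_simp; ring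
      _ ≤ _ := by gcongr; exact add_one_le_exp _
  have base_nonneg : 0 ≤ m - 1 + exp t := by linarith [exp_pos t]
  have pow_le := pow_le_pow_left₀ base_nonneg base_le n
  rw [mul_pow, ← exp_nat_mul] at pow_le
  rw [exp_add, exp_neg, mul_left_comm, inv_mul_eq_div, le_div_iff₀ (exp_pos _)]
  refine (markov.trans pow_le).trans_eq ?_
  congr 2
  ring

theorem card_exists_large_fiber_le {t F c : ℝ} (ht : 0 ≤ t)
    (hF : Fintype.card X * exp (-(t * F) + (exp t - 1) * Fintype.card V / Fintype.card X) ≤ c) :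
    (#{a : V → X | ∃ x, F ≤ (#{v | a v = x} : ℝ)} : ℝ) ≤
      c * (Fintype.card X : ℝ) ^ Fintype.card V := by
  have union : ({a : V → X | ∃ x, F ≤ (#{v | a v = x} : ℝ)} : Finset (V → X)) ⊆
      univ.biUnion fun x : X => {a : V → X | F ≤ (#{v | a v = x} : ℝ)} := by
    intro a ha
    simpa using ha
  calc (#{a : V → X | ∃ x, F ≤ (#{v | a v = x} : ℝ)} : ℝ)
      ≤ ∑ x : X, (#{a : V → X | F ≤ (#{v | a v = x} : ℝ)} : ℝ) := by
        exact_mod_cast (card_le_card union).trans card_biUnion_le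
    _ ≤ ∑ _x : X, (Fintype.card X : ℝ) ^ Fintype.card V *
          exp (-(t * F) + (exp t - 1) * Fintype.card V / Fintype.card X) :=
        sum_le_sum fun x _ => card_large_fiber_le ht F x
    _ = Fintype.card X * exp (-(t * F) + (exp t - 1) * Fintype.card V / Fintype.card X) *
          (Fintype.card X : ℝ) ^ Fintype.card V := by
        rw [sum_const, card_univ, nsmul_eq_mul]; ring
    _ ≤ _ := by gcongr

theorem sum_sum_pow_imageDefect_le {k : ℕ} {c : ℝ} (hc : 0 ≤ c) (hck : c * k ≤ Fintype.card X) :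
    ∑ q : (V → X) × (V → X), ∑ I ∈ powersetCard k univ,
        c ^ (imageDefect q.1 I + imageDefect q.2 I) ≤
      (Fintype.card X : ℝ) ^ Fintype.card V * (Fintype.card X : ℝ) ^ Fintype.card V *
        (4 ^ k * (Fintype.card V).choose k) := by
  set N : ℝ := (Fintype.card X : ℝ) ^ Fintype.card V
  have sum_maps {I : Finset V} (hI : I ∈ powersetCard k univ) :
      ∑ q : (V → X) × (V → X), c ^ (imageDefect q.1 I + imageDefect q.2 I) ≤ N * N * 4 ^ k := by
    obtain rfl := (mem_powersetCard.1 hI).2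
    have h := sum_pow_imageDefect_le (X := X) hc I hck
    simp only [pow_add, Fintype.sum_prod_type, ← sum_mul_sum]
    refine (mul_le_mul h h (sum_nonneg fun _ _ => by positivity) (by positivity)).trans_eq ?_
    rw [show (4 : ℝ) = 2 * 2 by norm_num, mul_pow]
    ring
  rw [sum_comm]
  refine (sum_le_sum fun I hI => sum_maps hI).trans_eq ?_
  rw [sum_const, card_powersetCard, card_univ, nsmul_eq_mul]
  ring

omit [DecidableEq V] in
theorem exists_maps_small_fiber_sum_pow_imageDefect_le {k : ℕ} {c t F : ℝ} [Nonempty X]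
    (hc : 0 ≤ c) (hck : c * k ≤ Fintype.card X) (ht : 0 ≤ t)
    (hF : Fintype.card X * exp (-(t * F) + (exp t - 1) * Fintype.card V / Fintype.card X) ≤
      1 / 8) :
    ∃ a b : V → X, (∀ x, (#{v | a v = x} : ℝ) ≤ F) ∧ (∀ x, (#{v | b v = x} : ℝ) ≤ F) ∧
      ∑ I ∈ powersetCard k univ, c ^ (imageDefect a I + imageDefect b I) ≤
        2 * (4 ^ k * (Fintype.card V).choose k) := by
  classical
  set N : ℝ := (Fintype.card X : ℝ) ^ Fintype.card V with hN
  set B : ℝ := 4 ^ k * (Fintype.card V).choose k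
  set bad : Finset (V → X) := {a | ∃ x, F ≤ (#{v | a v = x} : ℝ)} with hbad
  have N_pos : 0 < N := by positivity
  have bad_le : (#bad : ℝ) ≤ 1 / 8 * N := card_exists_large_fiber_le ht hF
  have good_ge : 7 / 8 * N ≤ #badᶜ := by
    rw [card_compl, Nat.cast_sub (card_le_univ _), Fintype.card_fun, Nat.cast_pow]
    linarith
  have good_nonempty : (badᶜ ×ˢ badᶜ).Nonempty := by
    have : badᶜ.Nonempty := card_pos.1 (Nat.cast_pos (α := ℝ).1 (by linarith))
    exact this.product this
  have average : ∑ q ∈ badᶜ ×ˢ badᶜ, ∑ I ∈ powersetCard k univ,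
      c ^ (imageDefect q.1 I + imageDefect q.2 I) ≤ ∑ _q ∈ badᶜ ×ˢ badᶜ, 2 * B := by
    refine (sum_le_sum_of_subset_of_nonneg (subset_univ _)
      fun _ _ _ => sum_nonneg fun _ _ => by positivity).trans
        ((sum_sum_pow_imageDefect_le hc hck).trans ?_)
    rw [sum_const, card_product, nsmul_eq_mul, Nat.cast_mul]
    have good_sq := mul_le_mul good_ge good_ge (by positivity) (by positivity)
    have B_nonneg : 0 ≤ B := by positivity
    nlinarith [mul_le_mul_of_nonneg_right good_sq B_nonneg, mul_pos N_pos N_pos,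
      mul_nonneg (mul_pos N_pos N_pos).le B_nonneg]
  obtain ⟨q, hq, hle⟩ := exists_le_of_sum_le good_nonempty average
  simp only [mem_product, mem_compl, hbad, mem_filter_univ, not_exists, not_le] at hq
  exact ⟨q.1, q.2, fun x => (hq.1 x).le, fun x => (hq.2 x).le, hle⟩

end RandomMaps

section EdgeGraphs

open Finset

variable {V X : Type*}

/-- The graph on `X` whose edges are the non-diagonal members of `S`. -/
abbrev edgeGraph (S : Finset (Sym2 X)) : SimpleGraph X := .fromEdgeSet S

/-- The union of the pull-backs of `G₁'` along `a` and of `G₂'` along `b`, where a pair is taken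
from one graph only if its image in the other graph (`G₂`, respectively `G₁`) has no common
neighbour. -/
def twoBite (a b : V → X) (G₁' G₁ G₂' G₂ : SimpleGraph X) : SimpleGraph V where
  Adj u v :=
    (G₁'.Adj (a u) (a v) ∧ ¬ ∃ z, G₂.Adj (b u) z ∧ G₂.Adj (b v) z) ∨
    (G₂'.Adj (b u) (b v) ∧ ¬ ∃ z, G₁.Adj (a u) z ∧ G₁.Adj (a v) z)
  symm := ⟨fun _ _ h => h.imp
    (fun ⟨adj, h⟩ => ⟨adj.symm, fun ⟨z, hu, hv⟩ => h ⟨z, hv, hu⟩⟩)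
    (fun ⟨adj, h⟩ => ⟨adj.symm, fun ⟨z, hu, hv⟩ => h ⟨z, hv, hu⟩⟩)⟩
  loopless := ⟨fun _ h => h.elim (fun h => h.1.ne rfl) fun h => h.1.ne rfl⟩

theorem twoBite_swap (a b : V → X) (G₁' G₁ G₂' G₂ : SimpleGraph X) :
    twoBite a b G₁' G₁ G₂' G₂ = twoBite b a G₂' G₂ G₁' G₁ := by
  ext u v
  exact or_comm

theorem twoBite_cliqueFree {a b : V → X} {G₁' G₁ G₂' G₂ : SimpleGraph X} (h₁ : G₁' ≤ G₁)
    (h₂ : G₂' ≤ G₂) (free₁ : G₁'.CliqueFree 3) (free₂ : G₂'.CliqueFree 3) :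
    (twoBite a b G₁' G₁ G₂' G₂).CliqueFree 3 := by
  classical
  intro s hs
  obtain ⟨x, y, z, hxy, hxz, hyz, -⟩ := SimpleGraph.is3Clique_iff.1 hs
  -- If the three edges do not come from the same graph, the two edges from one graph give the
  -- endpoints of the third a common neighbour.
  rcases hxy with ⟨xy, no_xy⟩ | ⟨xy, no_xy⟩ <;> rcases hyz with ⟨yz, no_yz⟩ | ⟨yz, no_yz⟩ <;>
    rcases hxz with ⟨xz, no_xz⟩ | ⟨xz, no_xz⟩
  · exact free₁ _ (SimpleGraph.is3Clique_triple_iff.2 ⟨xy, xz, yz⟩)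
  · exact no_xz ⟨_, h₁ xy, h₁ yz.symm⟩
  · exact no_yz ⟨_, h₁ xy.symm, h₁ xz.symm⟩
  · exact no_xy ⟨_, h₂ xz, h₂ yz⟩
  · exact no_xy ⟨_, h₁ xz, h₁ yz⟩
  · exact no_yz ⟨_, h₂ xy.symm, h₂ xz.symm⟩
  · exact no_xz ⟨_, h₂ xy, h₂ yz.symm⟩
  · exact free₂ _ (SimpleGraph.is3Clique_triple_iff.2 ⟨xy, xz, yz⟩)

variable [DecidableEq X]

/-- The pairs of distinct elements of `t`, that is, the edges of the complete graph on `t`. -/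
def cliqueEdges (t : Finset X) : Finset (Sym2 X) := t.offDiag.image Sym2.mk.uncurry

theorem mk_mem_cliqueEdges {t : Finset X} {x y : X} :
    s(x, y) ∈ cliqueEdges t ↔ x ∈ t ∧ y ∈ t ∧ x ≠ y := by
  simp only [cliqueEdges, mem_image, mem_offDiag, Prod.exists]
  constructor
  · rintro ⟨x', y', h, heq⟩
    rcases Sym2.eq_iff.1 heq with ⟨rfl, rfl⟩ | ⟨rfl, rfl⟩
    exacts [h, ⟨h.2.1, h.1, h.2.2.symm⟩]
  · exact fun h => ⟨x, y, h, rfl⟩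

theorem card_cliqueEdges_of_card_eq_three {t : Finset X} (ht : #t = 3) : #(cliqueEdges t) = 3 := by
  rw [cliqueEdges, Sym2.card_image_offDiag, ht, Nat.choose_succ_self_right]

/-- `𝒯` is a family of edge-disjoint triangles of `edgeGraph S`. -/
structure IsTrianglePacking (S : Finset (Sym2 X)) (𝒯 : Finset (Finset X)) : Prop where
  card_eq : ∀ t ∈ 𝒯, #t = 3
  cliqueEdges_subset : ∀ t ∈ 𝒯, cliqueEdges t ⊆ S
  pairwiseDisjoint : (𝒯 : Set (Finset X)).PairwiseDisjoint cliqueEdges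

theorem IsTrianglePacking.subset {S : Finset (Sym2 X)} {𝒯 𝒯' : Finset (Finset X)}
    (h𝒯 : IsTrianglePacking S 𝒯) (hsub : 𝒯' ⊆ 𝒯) : IsTrianglePacking S 𝒯' where
  card_eq t ht := h𝒯.card_eq t (hsub ht)
  cliqueEdges_subset t ht := h𝒯.cliqueEdges_subset t (hsub ht)
  pairwiseDisjoint := h𝒯.pairwiseDisjoint.subset (coe_subset.2 hsub)

theorem IsTrianglePacking.insert {S : Finset (Sym2 X)} {𝒯 : Finset (Finset X)}
    (h𝒯 : IsTrianglePacking S 𝒯) {t : Finset X} (ht : #t = 3)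
    (hsub : cliqueEdges t ⊆ S \ 𝒯.biUnion cliqueEdges) : IsTrianglePacking S (insert t 𝒯) where
  card_eq := forall_mem_insert _ _ _ |>.2 ⟨ht, h𝒯.card_eq⟩
  cliqueEdges_subset :=
    forall_mem_insert _ _ _ |>.2 ⟨hsub.trans sdiff_subset, h𝒯.cliqueEdges_subset⟩
  pairwiseDisjoint := by
    rw [coe_insert]
    exact h𝒯.pairwiseDisjoint.insert fun t' ht' _ =>
      disjoint_sdiff_self_left.mono hsub (subset_biUnion_of_mem cliqueEdges ht')

theorem exists_isTrianglePacking_cliqueFree [Finite X] (S : Finset (Sym2 X)) :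
    ∃ 𝒯, IsTrianglePacking S 𝒯 ∧
      (edgeGraph (S \ 𝒯.biUnion cliqueEdges)).CliqueFree 3 := by
  obtain ⟨𝒯, h𝒯, maximal⟩ := Set.exists_max_image {𝒯 | IsTrianglePacking S 𝒯} card
    (Set.toFinite _) ⟨∅, by simp, by simp, by simp⟩
  refine ⟨𝒯, h𝒯, fun t ht => ?_⟩
  have hsub : cliqueEdges t ⊆ S \ 𝒯.biUnion cliqueEdges := by
    rintro ⟨x, y⟩ he
    obtain ⟨hx, hy, hne⟩ := mk_mem_cliqueEdges.1 he
    exact ((SimpleGraph.fromEdgeSet_adj _).1 (ht.isClique hx hy hne)).1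
  have t_notMem : t ∉ 𝒯 := fun hmem => by
    obtain ⟨e, he⟩ : (cliqueEdges t).Nonempty :=
      card_pos.1 (by rw [card_cliqueEdges_of_card_eq_three ht.card_eq]; norm_num)
    exact (mem_sdiff.1 (hsub he)).2 (mem_biUnion.2 ⟨t, hmem, he⟩)
  have := maximal _ (h𝒯.insert ht.card_eq hsub)
  rw [card_insert_of_notMem t_notMem] at this
  omega

variable [Fintype X]

/-- The triples with at least two elements in `A`, that is, the triangles of the complete graph
on `X` which have an edge inside `A`. -/
def trianglesMeeting (A : Finset X) : Finset (Finset X) :=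
  {t ∈ powersetCard 3 univ | 1 < #(t ∩ A)}

theorem mem_trianglesMeeting {A t : Finset X} :
    t ∈ trianglesMeeting A ↔ #t = 3 ∧ 1 < #(t ∩ A) := by
  simp [trianglesMeeting]

theorem card_trianglesMeeting_le (A : Finset X) :
    #(trianglesMeeting A) ≤ #A ^ 2 * Fintype.card X := by
  have cover : trianglesMeeting A ⊆ (A ×ˢ A ×ˢ univ).image fun q => {q.1, q.2.1, q.2.2} := by
    intro t ht
    obtain ⟨ht, hA⟩ := mem_trianglesMeeting.1 ht
    obtain ⟨x, y, hx, hy, hxy⟩ := one_lt_card_iff.1 hA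
    have hsub : {x, y} ⊆ t := by simp [insert_subset_iff, mem_of_mem_inter_left hx,
      mem_of_mem_inter_left hy]
    obtain ⟨z, hz⟩ : ∃ z, t \ {x, y} = {z} := by
      rw [← card_eq_one, card_sdiff_of_subset hsub, card_pair hxy, ht]
    refine mem_image.2 ⟨(x, y, z), ?_, ?_⟩
    · simp [mem_of_mem_inter_right hx, mem_of_mem_inter_right hy]
    · rw [← sdiff_union_of_subset hsub, hz]
      ext w; simp only [mem_insert, mem_singleton, mem_union]; tauto
  calc #(trianglesMeeting A) ≤ #(A ×ˢ A ×ˢ univ) := (card_le_card cover).trans card_image_le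
    _ = #A ^ 2 * Fintype.card X := by rw [card_product, card_product, card_univ, ← mul_assoc, sq]

end EdgeGraphs

section Transversals

open Finset

variable {V X : Type*} [DecidableEq X]

/-- `I'` contains exactly one point of each non-empty fiber of `f` over `I`. -/
structure IsTransversal (f : V → X) (I I' : Finset V) : Prop where
  subset : I' ⊆ I
  injOn : Set.InjOn f I'
  image_eq : I'.image f = I.image f

theorem exists_isTransversal (f : V → X) (I : Finset V) : ∃ I', IsTransversal f I I' := by
  obtain ⟨I', hsub, hinj, himage⟩ := exists_subset_injOn_image_eq_of_surjOn (f := f) I (I.image f)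
    (by rw [coe_image]; exact Set.surjOn_image _ _)
  exact ⟨I', mod_cast hsub, hinj, himage⟩

theorem IsTransversal.card_image {f : V → X} {I I' : Finset V} (h : IsTransversal f I I') :
    #(I.image f) = #I' := by
  rw [← h.image_eq, card_image_of_injOn h.injOn]

theorem card_filter_mem_le_of_fiber_le {f : V → X} {F : ℕ} (I : Finset V)
    (hF : ∀ x, #{v ∈ I | f v = x} ≤ F) (Y : Finset X) : #{v ∈ I | f v ∈ Y} ≤ F * #Y := by
  calc #{v ∈ I | f v ∈ Y} = ∑ y ∈ Y, #{v ∈ {v ∈ I | f v ∈ Y} | f v = y} :=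
        card_eq_sum_card_fiberwise fun v hv => (mem_filter.1 hv).2
    _ ≤ ∑ _y ∈ Y, F := sum_le_sum fun y _ =>
        (card_le_card (filter_subset_filter _ (filter_subset _ _))).trans (hF y)
    _ = F * #Y := by rw [sum_const, smul_eq_mul, mul_comm]

/-- A chosen set of representatives of the non-empty fibers of `f` over `I`. -/
noncomputable def transversal (f : V → X) (I : Finset V) : Finset V :=
  (exists_isTransversal f I).choose

theorem isTransversal_transversal (f : V → X) (I : Finset V) :
    IsTransversal f I (transversal f I) :=
  (exists_isTransversal f I).choose_spec

end Transversals

section Labellings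

open Finset

variable {V X : Type*}

/-- What a labelling records about a point of `X` relative to a set of centers: it is set aside,
it has no neighbour among the centers, or `z` is its only neighbour among the centers. -/
inductive Label (X : Type*)
  | exceptional
  | free
  | center (z : X)

noncomputable instance : DecidableEq (Label X) := Classical.decEq _

variable [DecidableEq X]

/-- The labelling `φ` of `X` is admissible for the image of `I` under `a`, with centers in `Z`:
points off the image and centers are exceptional, at most `q` elements of `I` lie over exceptional
points and at most `D` over points with a given center. -/
structure IsLabelling (a : V → X) (I : Finset V) (Z : Finset X) (q D : ℕ) (φ : X → Label X) :
    Prop where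
  eq_exceptional_of_notMem_image : ∀ x, x ∉ I.image a → φ x = .exceptional
  eq_exceptional_of_mem : ∀ x ∈ Z, φ x = .exceptional
  mem_of_eq_center : ∀ x z, φ x = .center z → z ∈ Z
  card_exceptional_le : #{v ∈ I | φ (a v) = .exceptional} ≤ q
  card_center_le : ∀ z, #{v ∈ I | φ (a v) = .center z} ≤ D

/-- The elements of `I` over points labelled by a center. -/
noncomputable def centeredPart (a : V → X) (I : Finset V) (φ : X → Label X) : Finset V :=
  open Classical in {v ∈ I | ∃ z, φ (a v) = .center z}

/-- `x` and `y` are labelled by the same center. -/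
def ShareCenter (φ : X → Label X) (x y : X) : Prop := ∃ z, φ x = .center z ∧ φ y = .center z

/-- The elements of `I'` which are exceptional in neither labelling. -/
noncomputable def regularPart (a b : V → X) (I' : Finset V) (φ₁ φ₂ : X → Label X) : Finset V :=
  {u ∈ I' | φ₁ (a u) ≠ .exceptional ∧ φ₂ (b u) ≠ .exceptional}

/-- The images under `a` of the pairs of regular elements that share no center under `φ₂`. If `I'`
is independent in the two-bite graph, these are essentially non-edges of the first graph. -/
noncomputable def openPairs (a b : V → X) (I' : Finset V) (φ₁ φ₂ : X → Label X) :
    Finset (Sym2 X) :=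
  open Classical in
  ({q ∈ (regularPart a b I' φ₁ φ₂).offDiag | ¬ ShareCenter φ₂ (b q.1) (b q.2)}).image
    fun q => s(a q.1, a q.2)

omit [DecidableEq X] in
theorem mem_centeredPart {a : V → X} {I : Finset V} {φ : X → Label X} {v : V} :
    v ∈ centeredPart a I φ ↔ v ∈ I ∧ ∃ z, φ (a v) = .center z := by
  simp only [centeredPart, mem_filter]

omit [DecidableEq X] in
theorem regularPart_subset (a b : V → X) (I' : Finset V) (φ₁ φ₂ : X → Label X) :
    regularPart a b I' φ₁ φ₂ ⊆ I' :=
  filter_subset _ _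

theorem mem_openPairs {a b : V → X} {I' : Finset V} {φ₁ φ₂ : X → Label X} {e : Sym2 X} :
    e ∈ openPairs a b I' φ₁ φ₂ ↔ ∃ u ∈ regularPart a b I' φ₁ φ₂, ∃ v ∈ regularPart a b I' φ₁ φ₂,
      u ≠ v ∧ ¬ ShareCenter φ₂ (b u) (b v) ∧ s(a u, a v) = e := by
  simp only [openPairs, mem_image, mem_filter, mem_offDiag, Prod.exists, and_assoc,
    exists_and_left]

omit [DecidableEq X] in
theorem sum_card_filter_eq_center [Fintype X] (b : V → X) (R : Finset V) (φ : X → Label X) :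
    ∑ z, #{u ∈ R | φ (b u) = .center z} = #(centeredPart b R φ) := by
  classical
  rw [← card_biUnion]
  · congr 1
    ext u
    simp [mem_centeredPart]
  · intro z _ z' _ hne
    refine disjoint_left.2 fun u hz hz' => hne ?_
    simpa using (mem_filter.1 hz).2.symm.trans (mem_filter.1 hz').2

theorem IsLabelling.sum_card_filter_eq_center_sq_le_mul [Fintype X] {b : V → X} {I R : Finset V}
    {Z : Finset X} {q D : ℕ} {φ : X → Label X} (hφ : IsLabelling b I Z q D φ) (hR : R ⊆ I) :
    ∑ z, #{u ∈ R | φ (b u) = .center z} ^ 2 ≤ D * #(centeredPart b I φ) := by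
  rw [← sum_card_filter_eq_center, mul_sum]
  refine sum_le_sum fun z _ => ?_
  have hRI : #{u ∈ R | φ (b u) = .center z} ≤ #{u ∈ I | φ (b u) = .center z} :=
    card_le_card (filter_subset_filter _ hR)
  rw [sq]
  exact Nat.mul_le_mul (hRI.trans (hφ.card_center_le z)) hRI

omit [DecidableEq X] in
theorem card_centeredPart_add_card_free_le {a : V → X} {I R : Finset V} (φ : X → Label X)
    (hR : R ⊆ I) : #{v ∈ R | φ (a v) = .free} + #(centeredPart a I φ) ≤ #I := by
  classical
  rw [← card_union_of_disjoint]
  · exact card_le_card (union_subset ((filter_subset _ _).trans hR) (filter_subset _ _))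
  · refine disjoint_left.2 fun v hv hv' => ?_
    obtain ⟨z, hz⟩ := (mem_centeredPart.1 hv').2
    simp [(mem_filter.1 hv).2] at hz

/-- The edges of the first graph that are prescribed by a labelling: each labelled point is joined
to its center. -/
noncomputable def labelEdges [Fintype X] (φ : X → Label X) : Finset (Sym2 X) :=
  ({q | φ q.1 = .center q.2} : Finset (X × X)).image Sym2.mk.uncurry

theorem mem_labelEdges [Fintype X] {φ : X → Label X} {e : Sym2 X} :
    e ∈ labelEdges φ ↔ ∃ x z, φ x = .center z ∧ s(x, z) = e := by
  simp [labelEdges]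

namespace IsLabelling

variable {a b : V → X} {I I₁ : Finset V} {Z : Finset X} {q D : ℕ} {φ₁ φ₂ : X → Label X}

theorem eq_exceptional_of_eq_center (hφ : IsLabelling a I Z q D φ₁) {x z : X}
    (hx : φ₁ x = .center z) : φ₁ z = .exceptional :=
  hφ.eq_exceptional_of_mem z (hφ.mem_of_eq_center x z hx)

theorem disjoint_labelEdges_openPairs [Fintype X] (hφ : IsLabelling a I Z q D φ₁) (I₁ : Finset V)
    (φ₂ : X → Label X) : Disjoint (labelEdges φ₁) (openPairs a b I₁ φ₁ φ₂) := by
  refine disjoint_left.2 fun e he ho => ?_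
  obtain ⟨x, z, hx, rfl⟩ := mem_labelEdges.1 he
  obtain ⟨u, hu, v, hv, -, -, huv⟩ := mem_openPairs.1 ho
  have hz := hφ.eq_exceptional_of_eq_center hx
  rcases Sym2.eq_iff.1 huv with ⟨-, rfl⟩ | ⟨rfl, -⟩
  · exact (mem_filter.1 hv).2.1 hz
  · exact (mem_filter.1 hu).2.1 hz

theorem card_centeredPart_le_card_labelEdges [Fintype X] (hφ : IsLabelling a I Z q D φ₁)
    (ha : Set.InjOn a I₁) : #(centeredPart a I₁ φ₁) ≤ #(labelEdges φ₁) := by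
  refine card_le_card_of_forall_subsingleton (fun v e => ∃ z, φ₁ (a v) = .center z ∧ s(a v, z) = e)
    (fun v hv => ?_) ?_
  · obtain ⟨z, hz⟩ := (mem_centeredPart.1 hv).2
    exact ⟨_, mem_labelEdges.2 ⟨_, z, hz, rfl⟩, z, hz, rfl⟩
  · rintro e - v ⟨hv, z, hz, rfl⟩ w ⟨hw, z', hz', heq⟩
    rcases Sym2.eq_iff.1 heq with ⟨h, -⟩ | ⟨h, -⟩
    · exact ha (mem_centeredPart.1 hv).1 (mem_centeredPart.1 hw).1 h.symm
    · have hexc := hφ.eq_exceptional_of_eq_center hz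
      rw [← h, hz'] at hexc
      cases hexc

theorem card_image_le [Fintype X] (hφ₁ : IsLabelling a I Z q D φ₁) {Z' : Finset X}
    (hφ₂ : IsLabelling b I Z' q D φ₂) (hI₁ : IsTransversal a I I₁) :
    #(I.image a) ≤
      #(labelEdges φ₁) + #{v ∈ regularPart a b I₁ φ₁ φ₂ | φ₁ (a v) = .free} + 2 * q := by
  classical
  have hcover : I₁ ⊆ centeredPart a I₁ φ₁ ∪ {v ∈ regularPart a b I₁ φ₁ φ₂ | φ₁ (a v) = .free} ∪
      ({v ∈ I | φ₁ (a v) = .exceptional} ∪ {v ∈ I | φ₂ (b v) = .exceptional}) := by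
    intro v hv
    have hvI := hI₁.subset hv
    cases hva : φ₁ (a v) <;> by_cases hvb : φ₂ (b v) = .exceptional <;>
      simp [mem_centeredPart, regularPart, hv, hvI, hva, hvb]
  have hcard := (card_le_card hcover).trans ((card_union_le _ _).trans
    (Nat.add_le_add (card_union_le _ _) (card_union_le _ _)))
  have hcentered := hφ₁.card_centeredPart_le_card_labelEdges hI₁.injOn
  have hexc₁ := hφ₁.card_exceptional_le
  have hexc₂ := hφ₂.card_exceptional_le
  rw [hI₁.card_image]
  omega

end IsLabelling

theorem card_filter_mk_eq_le_two {f : V → X} {R : Finset V} (hf : Set.InjOn f R) (e : Sym2 X) :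
    #{q ∈ R ×ˢ R | s(f q.1, f q.2) = e} ≤ 2 := by
  classical
  rcases eq_empty_or_nonempty {q ∈ R ×ˢ R | s(f q.1, f q.2) = e} with h | ⟨⟨u, v⟩, huv⟩
  · simp [h]
  refine (card_le_card (t := {(u, v), (v, u)}) ?_).trans card_le_two
  rintro ⟨u', v'⟩ h'
  simp only [mem_filter, mem_product] at huv h'
  rw [mem_insert, mem_singleton]
  rcases Sym2.eq_iff.1 (h'.2.trans huv.2.symm) with ⟨hu, hv⟩ | ⟨hu, hv⟩
  · exact Or.inl (Prod.ext (hf h'.1.1 huv.1.1 hu) (hf h'.1.2 huv.1.2 hv))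
  · exact Or.inr (Prod.ext (hf h'.1.1 huv.1.2 hu) (hf h'.1.2 huv.1.1 hv))

theorem card_le_two_mul_card_image_mk {f : V → X} {R : Finset V} (hf : Set.InjOn f R)
    {P : Finset (V × V)} (hP : P ⊆ R ×ˢ R) : #P ≤ 2 * #(P.image fun q => s(f q.1, f q.2)) :=
  card_le_mul_card_image _ 2 fun e _ =>
    (card_le_card (filter_subset_filter _ hP)).trans (card_filter_mk_eq_le_two hf e)

theorem card_regularPart_sq_le [Fintype X] {a b : V → X} {I₁ : Finset V} {φ₁ φ₂ : X → Label X}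
    (ha : Set.InjOn a I₁) :
    #(regularPart a b I₁ φ₁ φ₂) ^ 2 ≤ 2 * #(openPairs a b I₁ φ₁ φ₂) +
      #(regularPart a b I₁ φ₁ φ₂) +
      ∑ z, #{u ∈ regularPart a b I₁ φ₁ φ₂ | φ₂ (b u) = .center z} ^ 2 := by
  classical
  set R := regularPart a b I₁ φ₁ φ₂
  have hopen : #{q ∈ R.offDiag | ¬ ShareCenter φ₂ (b q.1) (b q.2)} ≤
      2 * #(openPairs a b I₁ φ₁ φ₂) :=
    (card_le_two_mul_card_image_mk (ha.mono (coe_subset.2 (regularPart_subset a b I₁ φ₁ φ₂)))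
      fun q hq => by
        have hq := mem_offDiag.1 (mem_filter.1 hq).1
        exact mem_product.2 ⟨hq.1, hq.2.1⟩).trans_eq
        (by rw [openPairs])
  have hshare : #{q ∈ R.offDiag | ShareCenter φ₂ (b q.1) (b q.2)} ≤
      ∑ z, #{u ∈ R | φ₂ (b u) = .center z} ^ 2 := by
    simp only [sq, ← card_product]
    refine (card_le_card fun q hq => ?_).trans card_biUnion_le
    obtain ⟨hq, z, huz, hvz⟩ := mem_filter.1 hq
    obtain ⟨hu, hv, -⟩ := mem_offDiag.1 hq
    simp only [mem_biUnion, mem_univ, true_and, mem_product, mem_filter]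
    exact ⟨z, ⟨hu, huz⟩, hv, hvz⟩
  have hsplit := card_filter_add_card_filter_not (s := R.offDiag)
    fun q => ShareCenter φ₂ (b q.1) (b q.2)
  rw [offDiag_card] at hsplit
  rw [sq]
  omega

end Labellings

section CenterLabels

open Finset

variable {V X : Type*}

/-- The number of elements of `I` whose image under `b` is adjacent to `z`. -/
def nbrCount (G : SimpleGraph X) [DecidableRel G.Adj] (b : V → X) (I : Finset V) (z : X) : ℕ :=
  #{v ∈ I | G.Adj z (b v)}

open Classical in
/-- The labelling of the points of `A` by their neighbours in the set of centers `Z`. -/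
noncomputable def centerLabel (G : SimpleGraph X) (A Z : Finset X) (x : X) : Label X :=
  if x ∉ A ∨ x ∈ Z ∨ ∃ z ∈ Z, ∃ z' ∈ Z, z ≠ z' ∧ G.Adj z x ∧ G.Adj z' x then .exceptional
  else if h : ∃ z ∈ Z, G.Adj z x then .center h.choose
  else .free

section

variable {G : SimpleGraph X} {A Z : Finset X} {x z : X}

theorem centerLabel_eq_exceptional_iff : centerLabel G A Z x = .exceptional ↔
    x ∉ A ∨ x ∈ Z ∨ ∃ z ∈ Z, ∃ z' ∈ Z, z ≠ z' ∧ G.Adj z x ∧ G.Adj z' x := by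
  unfold centerLabel
  split_ifs with hexc hadj <;> simp only [hexc]

theorem mem_and_adj_of_centerLabel_eq_center (h : centerLabel G A Z x = .center z) :
    z ∈ Z ∧ G.Adj z x := by
  unfold centerLabel at h
  split_ifs at h with hexc hadj
  rw [← Label.center.inj h]
  exact hadj.choose_spec

theorem centerLabel_eq_center_of_adj (h : centerLabel G A Z x ≠ .exceptional) (hz : z ∈ Z)
    (hadj : G.Adj z x) : centerLabel G A Z x = .center z := by
  have hexc := mt centerLabel_eq_exceptional_iff.2 h
  have hex : ∃ z ∈ Z, G.Adj z x := ⟨z, hz, hadj⟩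
  rw [centerLabel, if_neg hexc, dif_pos hex]
  by_contra hne
  exact hexc (.inr (.inr ⟨_, hex.choose_spec.1, z, hz, fun h => hne (congrArg _ h),
    hex.choose_spec.2, hadj⟩))

end

variable [DecidableEq X] [Fintype X]

/-- The number of common neighbours of `z` and `z'`. -/
def codegree (G : SimpleGraph X) [DecidableRel G.Adj] (z z' : X) : ℕ :=
  #(G.neighborFinset z ∩ G.neighborFinset z')

theorem card_filter_exceptional_le {G : SimpleGraph X} [DecidableRel G.Adj] {a : V → X}
    {I : Finset V} {F C : ℕ} (hF : ∀ x, #{v ∈ I | a v = x} ≤ F)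
    (hC : Pairwise fun z z' => codegree G z z' ≤ C) (Z : Finset X) :
    #{v ∈ I | centerLabel G (I.image a) Z (a v) = .exceptional} ≤ F * (#Z + #Z ^ 2 * C) := by
  set Y := Z ∪ Z.offDiag.biUnion fun q => G.neighborFinset q.1 ∩ G.neighborFinset q.2
  have hY : #Y ≤ #Z + #Z ^ 2 * C := by
    refine (card_union_le _ _).trans (Nat.add_le_add_left ?_ _)
    refine (card_biUnion_le_card_mul _ _ C fun q hq => hC (mem_offDiag.1 hq).2.2).trans ?_
    rw [offDiag_card, sq]
    exact Nat.mul_le_mul_right _ (Nat.sub_le _ _)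
  refine (card_le_card fun v hv => ?_).trans
    ((card_filter_mem_le_of_fiber_le I hF Y).trans (Nat.mul_le_mul_left _ hY))
  obtain ⟨hvI, hexc⟩ := mem_filter.1 hv
  refine mem_filter.2 ⟨hvI, ?_⟩
  rcases centerLabel_eq_exceptional_iff.1 hexc with h | h | ⟨z, hz, z', hz', hne, hadj, hadj'⟩
  · exact absurd (mem_image_of_mem a hvI) h
  · exact mem_union_left _ h
  · exact mem_union_right _ (mem_biUnion.2 ⟨(z, z'), mem_offDiag.2 ⟨hz, hz', hne⟩,
      mem_inter.2 ⟨by simpa using hadj, by simpa using hadj'⟩⟩)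

theorem isLabelling_centerLabel {G : SimpleGraph X} [DecidableRel G.Adj] {a : V → X}
    {I : Finset V} {F C d : ℕ} (hF : ∀ x, #{v ∈ I | a v = x} ≤ F)
    (hC : Pairwise fun z z' => codegree G z z' ≤ C) (hd : ∀ z, G.degree z ≤ d) (Z : Finset X) :
    IsLabelling a I Z (F * (#Z + #Z ^ 2 * C)) (F * d) (centerLabel G (I.image a) Z) where
  eq_exceptional_of_notMem_image _ hx := centerLabel_eq_exceptional_iff.2 (.inl hx)
  eq_exceptional_of_mem _ hx := centerLabel_eq_exceptional_iff.2 (.inr (.inl hx))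
  mem_of_eq_center _ _ hx := (mem_and_adj_of_centerLabel_eq_center hx).1
  card_exceptional_le := card_filter_exceptional_le hF hC Z
  card_center_le z := by
    refine (card_le_card fun v hv => ?_).trans ((card_filter_mem_le_of_fiber_le I hF _).trans
      (Nat.mul_le_mul_left F (hd z)))
    obtain ⟨hvI, hcenter⟩ := mem_filter.1 hv
    exact mem_filter.2 ⟨hvI, by simpa using (mem_and_adj_of_centerLabel_eq_center hcenter).2⟩

theorem labelEdges_centerLabel_subset (S : Finset (Sym2 X)) (A Z : Finset X) :
    labelEdges (centerLabel (edgeGraph S) A Z) ⊆ S := by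
  intro e he
  obtain ⟨x, z, hx, rfl⟩ := mem_labelEdges.1 he
  have hadj := (mem_and_adj_of_centerLabel_eq_center hx).2.symm
  simpa using (SimpleGraph.fromEdgeSet_adj _).1 hadj |>.1

/-- The pairs in `I` whose images under `b` have a common neighbour adjacent to the images of fewer
than `Λ` elements of `I`. -/
def lowPairs (G : SimpleGraph X) [DecidableRel G.Adj] (b : V → X) (I : Finset V) (Λ : ℕ) :
    Finset (V × V) :=
  {q ∈ I ×ˢ I | ∃ z, nbrCount G b I z < Λ ∧ G.Adj z (b q.1) ∧ G.Adj z (b q.2)}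

theorem inter_openPairs_subset {a b : V → X} {I I₁ : Finset V} {S₁ S₂ : Finset (Sym2 X)}
    {𝒯 : Finset (Finset X)} {G₂' : SimpleGraph X} {Z : Finset X} {Λ : ℕ} (φ₁ : X → Label X)
    (hI₁ : IsTransversal a I I₁)
    (hI : (twoBite a b (edgeGraph (S₁ \ 𝒯.biUnion cliqueEdges)) (edgeGraph S₁) G₂'
      (edgeGraph S₂)).IsIndepSet I)
    (hZ : ∀ z, Λ ≤ nbrCount (edgeGraph S₂) b I z → z ∈ Z) :
    S₁ ∩ openPairs a b I₁ φ₁ (centerLabel (edgeGraph S₂) (I.image b) Z) ⊆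
      {t ∈ 𝒯 | 1 < #(t ∩ I.image a)}.biUnion cliqueEdges ∪
        S₁ ∩ (lowPairs (edgeGraph S₂) b I Λ).image fun q => s(a q.1, a q.2) := by
  intro e he
  obtain ⟨heS, he⟩ := mem_inter.1 he
  obtain ⟨u, hu, v, hv, huv, hshare, rfl⟩ := mem_openPairs.1 he
  obtain ⟨hu, -, hu₂⟩ := mem_filter.1 hu
  obtain ⟨hv, -, hv₂⟩ := mem_filter.1 hv
  have huI := hI₁.subset hu
  have hvI := hI₁.subset hv
  have hne : a u ≠ a v := fun h => huv (hI₁.injOn hu hv h)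
  by_cases ht : s(a u, a v) ∈ 𝒯.biUnion cliqueEdges
  · obtain ⟨t, ht, het⟩ := mem_biUnion.1 ht
    refine mem_union_left _ (mem_biUnion.2 ⟨t, mem_filter.2 ⟨ht, ?_⟩, het⟩)
    obtain ⟨hut, hvt, -⟩ := mk_mem_cliqueEdges.1 het
    exact one_lt_card.2 ⟨_, mem_inter.2 ⟨hut, mem_image_of_mem a huI⟩, _,
      mem_inter.2 ⟨hvt, mem_image_of_mem a hvI⟩, hne⟩
  · obtain ⟨z, huz, hvz⟩ : ∃ z, (edgeGraph S₂).Adj (b u) z ∧ (edgeGraph S₂).Adj (b v) z := by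
      by_contra hno
      have hadj : (edgeGraph (S₁ \ 𝒯.biUnion cliqueEdges)).Adj (a u) (a v) :=
        (SimpleGraph.fromEdgeSet_adj _).2 ⟨mem_sdiff.2 ⟨heS, ht⟩, hne⟩
      exact hI huI hvI huv (.inl ⟨hadj, hno⟩)
    refine mem_union_right _ (mem_inter.2 ⟨heS, mem_image.2 ⟨(u, v), ?_, rfl⟩⟩)
    refine mem_filter.2 ⟨mem_product.2 ⟨huI, hvI⟩, z, ?_, huz.symm, hvz.symm⟩
    by_contra! hlow
    exact hshare ⟨z, centerLabel_eq_center_of_adj hu₂ (hZ z hlow) huz.symm,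
      centerLabel_eq_center_of_adj hv₂ (hZ z hlow) hvz.symm⟩

end CenterLabels

section LowPairs

open Finset

variable {V X : Type*} [DecidableEq X]

/-- The pairs in `I` with different images under `b`, both adjacent to `z`. -/
def spreadPairs (G : SimpleGraph X) [DecidableRel G.Adj] (b : V → X) (I : Finset V) (z : X) :
    Finset (V × V) :=
  {q ∈ I ×ˢ I | b q.1 ≠ b q.2 ∧ G.Adj z (b q.1) ∧ G.Adj z (b q.2)}

/-- The number of spread pairs at `z`, counted only if `z` is adjacent to the images of fewer than
`Λ` elements of `I`. -/
def lowSpread (G : SimpleGraph X) [DecidableRel G.Adj] (b : V → X) (I : Finset V) (Λ : ℕ) (z : X) :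
    ℕ :=
  if nbrCount G b I z < Λ then #(spreadPairs G b I z) else 0

omit [DecidableEq X] in
theorem sum_nbrCount (G : SimpleGraph X) [DecidableRel G.Adj] (b : V → X) (I : Finset V)
    (Y : Finset X) : ∑ z ∈ Y, nbrCount G b I z = ∑ v ∈ I, #{z ∈ Y | G.Adj z (b v)} := by
  simp only [nbrCount, card_filter]
  exact sum_comm

theorem card_filter_adj_le (S : Finset (Sym2 X)) (B : Finset X) :
    #{q ∈ B ×ˢ B | (edgeGraph S).Adj q.1 q.2} ≤ 2 * #(S ∩ B.sym2) := by
  refine (card_le_two_mul_card_image_mk (f := id) (Set.injOn_id _) (filter_subset _ _)).trans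
    (Nat.mul_le_mul_left 2 (card_le_card fun e he => ?_))
  obtain ⟨q, hq, rfl⟩ := mem_image.1 he
  obtain ⟨hqB, hadj⟩ := mem_filter.1 hq
  exact mem_inter.2 ⟨mod_cast ((SimpleGraph.fromEdgeSet_adj _).1 hadj).1,
    mk_mem_sym2_iff.2 (mem_product.1 hqB)⟩

theorem sum_nbrCount_image_le {S : Finset (Sym2 X)} {b : V → X} {I : Finset V} {F : ℕ}
    (hF : ∀ x, #{v ∈ I | b v = x} ≤ F) :
    ∑ z ∈ I.image b, nbrCount (edgeGraph S) b I z ≤ F * (2 * #(S ∩ (I.image b).sym2)) := by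
  set B := I.image b
  calc ∑ z ∈ B, nbrCount (edgeGraph S) b I z
      = ∑ v ∈ I, #{z ∈ B | (edgeGraph S).Adj z (b v)} := sum_nbrCount ..
    _ = ∑ c ∈ B, #{v ∈ I | b v = c} * #{z ∈ B | (edgeGraph S).Adj z c} := by
        rw [sum_comp (fun c => #{z ∈ B | (edgeGraph S).Adj z c})]
        rfl
    _ ≤ ∑ c ∈ B, F * #{z ∈ B | (edgeGraph S).Adj z c} :=
        sum_le_sum fun c _ => Nat.mul_le_mul_right _ (hF c)
    _ = F * #{q ∈ B ×ˢ B | (edgeGraph S).Adj q.1 q.2} := by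
        rw [← mul_sum, card_filter, sum_product_right]
        simp only [card_filter]
    _ ≤ F * (2 * #(S ∩ B.sym2)) := Nat.mul_le_mul_left F (card_filter_adj_le S B)

variable [Fintype X]

theorem lowPairs_subset [DecidableEq V] (G : SimpleGraph X) [DecidableRel G.Adj] (b : V → X)
    (I : Finset V) (Λ : ℕ) :
    lowPairs G b I Λ ⊆ ({q ∈ I ×ˢ I | b q.2 = b q.1} ∪
      {z ∈ I.image b | nbrCount G b I z < Λ}.biUnion fun z =>
        {v ∈ I | G.Adj z (b v)} ×ˢ {v ∈ I | G.Adj z (b v)}) ∪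
      {z ∈ (I.image b)ᶜ | nbrCount G b I z < Λ}.biUnion (spreadPairs G b I) := by
  rintro ⟨u, v⟩ huv
  simp only [lowPairs, mem_filter, mem_product] at huv
  obtain ⟨⟨hu, hv⟩, z, hz, huz, hvz⟩ := huv
  by_cases hb : b v = b u
  · exact mem_union_left _ (mem_union_left _
      (mem_filter.2 ⟨mem_product.2 ⟨hu, hv⟩, hb⟩))
  by_cases hzB : z ∈ I.image b
  · exact mem_union_left _ (mem_union_right _ (mem_biUnion.2 ⟨z, mem_filter.2 ⟨hzB, hz⟩,
      mem_product.2 ⟨mem_filter.2 ⟨hu, huz⟩, mem_filter.2 ⟨hv, hvz⟩⟩⟩))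
  · exact mem_union_right _ (mem_biUnion.2 ⟨z, mem_filter.2 ⟨mem_compl.2 hzB, hz⟩,
      mem_filter.2 ⟨mem_product.2 ⟨hu, hv⟩, Ne.symm hb, huz, hvz⟩⟩)

theorem card_lowPairs_le {S : Finset (Sym2 X)} {b : V → X} {I : Finset V} {F : ℕ}
    (hF : ∀ x, #{v ∈ I | b v = x} ≤ F) (Λ : ℕ) :
    #(lowPairs (edgeGraph S) b I Λ) ≤ #I * F + Λ * (F * (2 * #(S ∩ (I.image b).sym2))) +
      ∑ z ∈ (I.image b)ᶜ, lowSpread (edgeGraph S) b I Λ z := by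
  classical
  refine (card_le_card (lowPairs_subset (edgeGraph S) b I Λ)).trans ((card_union_le _ _).trans
    (Nat.add_le_add ((card_union_le _ _).trans (Nat.add_le_add ?_ ?_)) ?_))
  · rw [card_filter, sum_product, ← smul_eq_mul, ← sum_const]
    simp only [← card_filter]
    exact sum_le_sum fun u _ => hF (b u)
  · calc _ ≤ ∑ z ∈ I.image b with nbrCount (edgeGraph S) b I z < Λ,
          nbrCount (edgeGraph S) b I z * nbrCount (edgeGraph S) b I z :=
          card_biUnion_le.trans_eq (sum_congr rfl fun z _ => card_product _ _)
      _ ≤ ∑ z ∈ I.image b, Λ * nbrCount (edgeGraph S) b I z :=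
          (sum_le_sum fun z hz => Nat.mul_le_mul_right _ (mem_filter.1 hz).2.le).trans
            (sum_le_sum_of_subset (filter_subset _ _))
      _ ≤ _ := by
          rw [← mul_sum]
          exact Nat.mul_le_mul_left _ (sum_nbrCount_image_le hF)
  · exact card_biUnion_le.trans_eq (sum_filter _ _)

theorem card_filter_le_nbrCount_le {G : SimpleGraph X} [DecidableRel G.Adj] {b : V → X}
    {I : Finset V} {F C Λ ζ : ℕ} (hF : ∀ x, #{v ∈ I | b v = x} ≤ F)
    (hC : Pairwise fun z z' => codegree G z z' ≤ C)
    (hζ : #I + (ζ + 1) ^ 2 * (F * C) < (ζ + 1) * Λ) : #{z | Λ ≤ nbrCount G b I z} ≤ ζ := by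
  by_contra! hlarge
  obtain ⟨Y, hY, hYcard⟩ := exists_subset_card_eq (Nat.succ_le_of_lt hlarge)
  rw [Nat.succ_eq_add_one] at hYcard
  have hlower : (ζ + 1) * Λ ≤ ∑ v ∈ I, #{z ∈ Y | G.Adj z (b v)} := by
    rw [← sum_nbrCount, ← hYcard, ← smul_eq_mul, ← sum_const]
    exact sum_le_sum fun z hz => (mem_filter.1 (hY hz)).2
  have hone_add (n : ℕ) : n ≤ 1 + (n * n - n) := by
    rcases Nat.lt_or_ge n 2 with h | h
    · omega
    · have := Nat.mul_le_mul_right n h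
      omega
  have hpairs : ∑ v ∈ I, #({z ∈ Y | G.Adj z (b v)}).offDiag =
      ∑ q ∈ Y.offDiag, #{v ∈ I | b v ∈ G.neighborFinset q.1 ∩ G.neighborFinset q.2} := by
    have hfilter : ∀ v, ({z ∈ Y | G.Adj z (b v)}).offDiag =
        {q ∈ Y.offDiag | G.Adj q.1 (b v) ∧ G.Adj q.2 (b v)} := fun v => by
      ext q
      simp only [mem_offDiag, mem_filter]
      tauto
    simp only [hfilter, card_filter, mem_inter, SimpleGraph.mem_neighborFinset]
    exact sum_comm
  have hupper : ∑ v ∈ I, #{z ∈ Y | G.Adj z (b v)} ≤ #I + (ζ + 1) ^ 2 * (F * C) := by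
    calc ∑ v ∈ I, #{z ∈ Y | G.Adj z (b v)}
        ≤ ∑ v ∈ I, (1 + #({z ∈ Y | G.Adj z (b v)}).offDiag) :=
          sum_le_sum fun v _ => by rw [offDiag_card]; exact hone_add _
      _ = #I + ∑ q ∈ Y.offDiag,
            #{v ∈ I | b v ∈ G.neighborFinset q.1 ∩ G.neighborFinset q.2} := by
          rw [sum_add_distrib, hpairs, sum_const, smul_eq_mul, mul_one]
      _ ≤ #I + #Y.offDiag * (F * C) := by
          refine Nat.add_le_add_left (sum_le_card_nsmul _ _ _ fun q hq => ?_) _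
          exact (card_filter_mem_le_of_fiber_le I hF _).trans
            (Nat.mul_le_mul_left _ (hC (mem_offDiag.1 hq).2.2))
      _ ≤ #I + (ζ + 1) ^ 2 * (F * C) := by
          rw [offDiag_card, hYcard, sq]
          gcongr
          exact Nat.sub_le _ _
  omega

theorem exists_centers {G : SimpleGraph X} [DecidableRel G.Adj] {b : V → X} {I : Finset V}
    {F C Λ ζ : ℕ} (hF : ∀ x, #{v ∈ I | b v = x} ≤ F)
    (hC : Pairwise fun z z' => codegree G z z' ≤ C)
    (hζ : #I + (ζ + 1) ^ 2 * (F * C) < (ζ + 1) * Λ) (hζX : ζ ≤ Fintype.card X) :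
    ∃ Z : Finset X, #Z = ζ ∧ ∀ z, Λ ≤ nbrCount G b I z → z ∈ Z := by
  obtain ⟨Z, hsub, -, hcard⟩ := exists_subsuperset_card_eq (subset_univ _)
    (card_filter_le_nbrCount_le hF hC hζ) (by rwa [card_univ])
  exact ⟨Z, hcard, fun z hz => hsub (by simpa using hz)⟩

end LowPairs

section Tails

open Finset Real

variable {X : Type*} [Fintype X] [DecidableEq X] {p l : ℝ}

omit [Fintype X] in
theorem disjoint_image_mk_image_mk {z z' : X} (hne : z ≠ z') {Y : Finset X} (hz' : z' ∉ Y) :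
    Disjoint (Y.image fun x => s(z, x)) (Y.image fun x => s(z', x)) := by
  simp only [disjoint_left, mem_image, not_exists, not_and]
  rintro _ ⟨x, hx, rfl⟩ y _ heq
  rcases Sym2.eq_iff.1 heq with ⟨h, -⟩ | ⟨h, -⟩
  · exact hne h.symm
  · exact hz' (h ▸ hx)

omit [Fintype X] in
theorem card_image_mk_union_image_mk {z z' : X} (hne : z ≠ z') {Y : Finset X} (hz' : z' ∉ Y) :
    #((Y.image fun x => s(z, x)) ∪ Y.image fun x => s(z', x)) = 2 * #Y := by
  rw [card_union_of_disjoint (disjoint_image_mk_image_mk hne hz'),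
    card_image_of_injective _ fun _ _ => Sym2.congr_right.1,
    card_image_of_injective _ fun _ _ => Sym2.congr_right.1, two_mul]

theorem bernProb_not_pairwise_codegree_le (hp : p ∈ Set.Icc 0 1) (C : ℕ) :
    bernProb p (fun S : Finset (Sym2 X) =>
      ¬ Pairwise fun z z' => codegree (edgeGraph S) z z' ≤ C) ≤
      (Fintype.card X : ℝ) ^ 2 * (Fintype.card X * p ^ 2) ^ (C + 1) := by
  have hp0 := hp.1
  let star (q : (X × X) × Finset X) : Finset (Sym2 X) :=
    (q.2.image fun x => s(q.1.1, x)) ∪ q.2.image fun x => s(q.1.2, x)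
  let stars : Finset ((X × X) × Finset X) :=
    {q ∈ (univ : Finset X).offDiag ×ˢ powersetCard (C + 1) univ | q.1.2 ∉ q.2}
  have card_star : ∀ q ∈ stars, #(star q) = 2 * (C + 1) := by
    rintro ⟨⟨z, z'⟩, Y⟩ hq
    obtain ⟨hq, hz'⟩ := mem_filter.1 hq
    obtain ⟨hzz', hY⟩ := mem_product.1 hq
    rw [← (mem_powersetCard.1 hY).2]
    exact card_image_mk_union_image_mk (mem_offDiag.1 hzz').2.2 hz'
  have card_stars : #stars ≤ Fintype.card X ^ 2 * Fintype.card X ^ (C + 1) := by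
    refine (card_filter_le _ _).trans ?_
    rw [card_product, offDiag_card, card_powersetCard, card_univ, sq]
    exact Nat.mul_le_mul (Nat.sub_le _ _) (Nat.choose_le_pow _ _)
  have exists_star (S : Finset (Sym2 X))
      (h : ¬ Pairwise fun z z' => codegree (edgeGraph S) z z' ≤ C) : ∃ q ∈ stars, star q ⊆ S := by
    simp only [Pairwise, not_forall, not_le] at h
    obtain ⟨z, z', hne, hC⟩ := h
    obtain ⟨Y, hY, hYcard⟩ := exists_subset_card_eq (Nat.succ_le_of_lt hC)
    have hadj : ∀ x ∈ Y, (edgeGraph S).Adj z x ∧ (edgeGraph S).Adj z' x := fun x hx => by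
      simpa only [mem_inter, SimpleGraph.mem_neighborFinset] using hY hx
    refine ⟨((z, z'), Y), mem_filter.2 ⟨mem_product.2 ⟨by simpa using hne, by simpa using hYcard⟩,
      fun h => (hadj z' h).2.ne rfl⟩, union_subset ?_ ?_⟩ <;> rw [image_subset_iff]
    exacts [fun x hx => ((SimpleGraph.fromEdgeSet_adj _).1 (hadj x hx).1).1,
      fun x hx => ((SimpleGraph.fromEdgeSet_adj _).1 (hadj x hx).2).1]
  calc _ ≤ ∑ q ∈ stars, bernProb p (fun S => star q ⊆ S) :=
        (bernProb_mono hp exists_star).trans (bernProb_exists_le hp _ _)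
    _ = #stars * p ^ (2 * (C + 1)) := by
        rw [sum_congr rfl fun q hq => by rw [bernProb_subset, card_star q hq], sum_const,
          nsmul_eq_mul]
    _ ≤ (Fintype.card X ^ 2 * Fintype.card X ^ (C + 1)) * p ^ (2 * (C + 1)) := by
        gcongr
        exact_mod_cast card_stars
    _ = _ := by rw [mul_pow, ← pow_mul, mul_assoc]

theorem bernProb_lt_card_inter_le (hp : p ∈ Set.Icc 0 1) (hl : 0 ≤ l) {O : Finset (Sym2 X)}
    {N : ℕ} (hO : #O ≤ N) (j : ℕ) :
    bernProb p (fun S => j < #(S ∩ O)) ≤ exp (-(l * j) + p * (exp l - 1) * N) := by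
  have hp0 := hp.1
  have hexp : 0 ≤ exp l - 1 := sub_nonneg.2 (one_le_exp hl)
  calc _ ≤ bernProb p (fun S => (j : ℝ) ≤ (#(S ∩ O) : ℝ)) :=
        bernProb_mono hp fun S h => Nat.cast_le.2 h.le
    _ ≤ exp (-(l * j) + p * (exp l - 1) * #O) := bernProb_le_card_inter hp hl O j
    _ ≤ _ := by gcongr

theorem bernProb_exists_lt_degree_le (hp : p ∈ Set.Icc 0 1) (hl : 0 ≤ l) (d : ℕ) :
    bernProb p (fun S : Finset (Sym2 X) => ∃ z, d < (edgeGraph S).degree z) ≤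
      Fintype.card X * exp (-(l * d) + p * (exp l - 1) * Fintype.card X) := by
  have degree_le (S : Finset (Sym2 X)) (z : X) :
      (edgeGraph S).degree z ≤ #(S ∩ univ.image fun x => s(z, x)) := by
    refine card_le_card_of_injOn (fun x => s(z, x)) (fun x hx => ?_)
      fun _ _ _ _ => Sym2.congr_right.1
    have hadj : (edgeGraph S).Adj z x := by simpa using hx
    exact mem_inter.2 ⟨((SimpleGraph.fromEdgeSet_adj _).1 hadj).1,
      mem_image_of_mem _ (mem_univ x)⟩
  calc _ ≤ bernProb p (fun S => ∃ z ∈ univ, d < #(S ∩ univ.image fun x => s(z, x))) :=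
        bernProb_mono hp fun S ⟨z, hz⟩ => ⟨z, mem_univ z, hz.trans_le (degree_le S z)⟩
    _ ≤ ∑ z, bernProb p (fun S => d < #(S ∩ univ.image fun x => s(z, x))) :=
        bernProb_exists_le hp _ _
    _ ≤ ∑ _z : X, exp (-(l * d) + p * (exp l - 1) * Fintype.card X) :=
        sum_le_sum fun z _ => bernProb_lt_card_inter_le hp hl card_image_le d
    _ = _ := by rw [sum_const, card_univ, nsmul_eq_mul]

theorem bernProb_exists_isTrianglePacking_le (hp : p ∈ Set.Icc 0 1) (A : Finset X) (j : ℕ) :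
    bernProb p (fun S : Finset (Sym2 X) =>
      ∃ 𝒯, IsTrianglePacking S 𝒯 ∧ 𝒯 ⊆ trianglesMeeting A ∧ j ≤ #𝒯) ≤
      ((#A ^ 2 * Fintype.card X).choose j : ℝ) * p ^ (3 * j) := by
  classical
  have hp0 := hp.1
  let packings : Finset (Finset (Finset X)) := {𝒯 ∈ powersetCard j (trianglesMeeting A) |
    (𝒯 : Set (Finset X)).PairwiseDisjoint cliqueEdges}
  have card_edges : ∀ 𝒯 ∈ packings, #(𝒯.biUnion cliqueEdges) = 3 * j := fun 𝒯 h𝒯 => by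
    obtain ⟨h𝒯, hdisj⟩ := mem_filter.1 h𝒯
    obtain ⟨hsub, hcard⟩ := mem_powersetCard.1 h𝒯
    rw [card_biUnion hdisj, sum_congr rfl fun t ht =>
      card_cliqueEdges_of_card_eq_three (mem_trianglesMeeting.1 (hsub ht)).1, sum_const, hcard,
      smul_eq_mul, mul_comm]
  have card_packings : #packings ≤ (#A ^ 2 * Fintype.card X).choose j := by
    refine (card_filter_le _ _).trans ?_
    rw [card_powersetCard]
    exact Nat.choose_le_choose _ (card_trianglesMeeting_le A)
  calc _ ≤ bernProb p (fun S => ∃ 𝒯 ∈ packings, 𝒯.biUnion cliqueEdges ⊆ S) := by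
        refine bernProb_mono hp ?_
        rintro S ⟨𝒯, h𝒯, hA, hj⟩
        obtain ⟨𝒰, h𝒰, hcard⟩ := exists_subset_card_eq hj
        exact ⟨𝒰, mem_filter.2 ⟨mem_powersetCard.2 ⟨h𝒰.trans hA, hcard⟩,
          h𝒯.pairwiseDisjoint.subset (coe_subset.2 h𝒰)⟩,
          biUnion_subset.2 fun t ht => h𝒯.cliqueEdges_subset t (h𝒰 ht)⟩
    _ ≤ ∑ 𝒯 ∈ packings, bernProb p (fun S => 𝒯.biUnion cliqueEdges ⊆ S) :=
        bernProb_exists_le hp _ _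
    _ = #packings * p ^ (3 * j) := by
        rw [← nsmul_eq_mul, ← sum_const]
        exact sum_congr rfl fun 𝒯 h𝒯 => by rw [bernProb_subset, card_edges 𝒯 h𝒯]
    _ ≤ _ := by gcongr

theorem bernProb_lt_card_inter_sym2_le (hp : p ∈ Set.Icc 0 1) (hl : 0 ≤ l) (B : Finset X)
    (J : ℕ) : bernProb p (fun S => J < #(S ∩ B.sym2)) ≤
      exp (-(l * J) + p * (exp l - 1) * #B ^ 2) := by
  have card_le : #B.sym2 ≤ #B ^ 2 := by
    rw [sq, ← card_product, sym2_eq_image]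
    exact card_image_le
  exact_mod_cast bernProb_lt_card_inter_le hp hl card_le J

theorem pairProb_lt_card_inter_image_lowPairs_le {V : Type*} (hp : p ∈ Set.Icc 0 1) (hl : 0 ≤ l)
    (a b : V → X) (I : Finset V) (Λ M j : ℕ) :
    pairProb p (fun S₁ S₂ : Finset (Sym2 X) => #(lowPairs (edgeGraph S₂) b I Λ) ≤ M ∧
      j < #(S₁ ∩ (lowPairs (edgeGraph S₂) b I Λ).image fun q => s(a q.1, a q.2))) ≤
      exp (-(l * j) + p * (exp l - 1) * M) := by
  refine pairProb_le_of_forall_right hp fun S₂ => ?_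
  by_cases hM : #(lowPairs (edgeGraph S₂) b I Λ) ≤ M
  · exact (bernProb_mono hp fun _ h => h.2).trans
      (bernProb_lt_card_inter_le hp hl (card_image_le.trans hM) j)
  · simp only [hM, false_and, bernProb, if_false, bernExp_const]
    positivity

end Tails

section ExponentialMoment

open Finset Real

variable {E : Type*} [Fintype E] [DecidableEq E] {p : ℝ}

theorem bernExp_subset_mul_exp_sum_le (hp : p ∈ Set.Icc 0 1) {ω : E → ℝ}
    (hω : ∀ e, ω e ∈ Set.Icc 0 1) (T : Finset E) :
    bernExp p (fun S => (if T ⊆ S then 1 else 0) * exp (∑ e ∈ S, ω e)) ≤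
      (p * exp 1) ^ #T * exp (2 * p * ∑ e, ω e) := by
  have hp0 := hp.1
  have as_product (S : Finset E) : (if T ⊆ S then 1 else 0) * exp (∑ e ∈ S, ω e) =
      ∏ e, if e ∈ S then exp (ω e) else if e ∈ T then 0 else 1 := by
    have split (e : E) : (if e ∈ S then exp (ω e) else if e ∈ T then 0 else 1) =
        (if e ∈ T → e ∈ S then 1 else 0) * if e ∈ S then exp (ω e) else 1 := by
      by_cases hS : e ∈ S <;> by_cases hT : e ∈ T <;> simp [hS, hT]
    rw [prod_congr rfl fun e _ => split e, prod_mul_distrib, prod_ite_zero,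
      prod_ite_mem, univ_inter, ← exp_sum, prod_const_one]
    simp only [mem_univ, true_imp_iff, subset_iff]
  have exp_le (e : E) : exp (ω e) ≤ 1 + 2 * ω e := by
    have h := exp_bound' (hω e).1 (hω e).2 (n := 2) (by norm_num)
    norm_num [sum_range_succ] at h
    nlinarith [(hω e).1, (hω e).2]
  have factor_le (e : E) : p * exp (ω e) + (1 - p) * (if e ∈ T then 0 else 1) ≤
      (if e ∈ T then p * exp 1 else 1) * exp (2 * p * ω e) := by
    have hω0 := (hω e).1
    split_ifs with he
    · rw [mul_zero, add_zero]
      refine (mul_le_mul_of_nonneg_left (exp_le_exp.2 (hω e).2) hp0).trans ?_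
      exact le_mul_of_one_le_right (by positivity) (one_le_exp (by positivity))
    · nlinarith [mul_le_mul_of_nonneg_left (exp_le e) hp0, add_one_le_exp (2 * p * ω e)]
  simp only [as_product, bernExp_prod]
  refine (prod_le_prod (fun e _ => ?_) fun e _ => factor_le e).trans_eq ?_
  · exact add_nonneg (by positivity)
      (mul_nonneg (sub_nonneg.2 hp.2) (by split_ifs <;> norm_num))
  · rw [prod_mul_distrib, prod_ite_mem, univ_inter, prod_const, ← exp_sum, ← mul_sum]

end ExponentialMoment

section LowSpread

open Finset Real

variable {V X : Type*} [DecidableEq X]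

theorem nbrCount_congr {S S' : Finset (Sym2 X)} {b : V → X} {I : Finset V} {z : X}
    (h : ∀ v ∈ I, (s(z, b v) ∈ S ↔ s(z, b v) ∈ S')) :
    nbrCount (edgeGraph S) b I z = nbrCount (edgeGraph S') b I z :=
  congrArg card (filter_congr fun v hv => by
    simp only [SimpleGraph.fromEdgeSet_adj, mem_coe, h v hv])

theorem lowSpread_congr {S S' : Finset (Sym2 X)} {b : V → X} {I : Finset V} {Λ : ℕ} {z : X}
    (h : ∀ v ∈ I, (s(z, b v) ∈ S ↔ s(z, b v) ∈ S')) :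
    lowSpread (edgeGraph S) b I Λ z = lowSpread (edgeGraph S') b I Λ z := by
  have hspread : spreadPairs (edgeGraph S) b I z = spreadPairs (edgeGraph S') b I z :=
    filter_congr fun q hq => by
      obtain ⟨hu, hv⟩ := mem_product.1 hq
      simp only [SimpleGraph.fromEdgeSet_adj, mem_coe, h _ hu, h _ hv]
  rw [lowSpread, lowSpread, nbrCount_congr h, hspread]

theorem card_spreadPairs_le (G : SimpleGraph X) [DecidableRel G.Adj] (b : V → X) (I : Finset V)
    (z : X) : #(spreadPairs G b I z) ≤ nbrCount G b I z ^ 2 := by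
  rw [sq, nbrCount, ← card_product]
  refine card_le_card fun q hq => ?_
  simp only [spreadPairs, mem_filter, mem_product] at hq ⊢
  tauto

/-- The number of `v ∈ I` for which the pair `{z, b v}` is `e`. -/
def starMultiplicity (b : V → X) (I : Finset V) (z : X) (e : Sym2 X) : ℕ :=
  #{v ∈ I | s(z, b v) = e}

variable {p μ l : ℝ} {F Λ : ℕ} {b : V → X} {I : Finset V} {z : X}

theorem starMultiplicity_le (hF : ∀ x, #{v ∈ I | b v = x} ≤ F) (e : Sym2 X) :
    starMultiplicity b I z e ≤ F := by
  rw [starMultiplicity]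
  rcases eq_empty_or_nonempty {v ∈ I | s(z, b v) = e} with h | ⟨v, hv⟩
  · simp [h]
  · refine (card_le_card fun u hu => ?_).trans (hF (b v))
    rw [mem_filter] at hu hv ⊢
    exact ⟨hu.1, Sym2.congr_right.1 (hu.2.trans hv.2.symm)⟩

theorem nbrCount_eq_sum_starMultiplicity (S : Finset (Sym2 X)) (hz : z ∉ I.image b) :
    nbrCount (edgeGraph S) b I z = ∑ e ∈ S, starMultiplicity b I z e := by
  have hadj : ({v ∈ I | (edgeGraph S).Adj z (b v)} : Finset V) = {v ∈ I | s(z, b v) ∈ S} := by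
    refine filter_congr fun v hv => ?_
    rw [SimpleGraph.fromEdgeSet_adj, mem_coe, and_iff_left]
    rintro rfl
    exact hz (mem_image_of_mem b hv)
  have hmaps : Set.MapsTo (fun v => s(z, b v)) ({v ∈ I | s(z, b v) ∈ S} : Finset V) S :=
    fun v hv => (mem_filter.1 hv).2
  rw [nbrCount, hadj, card_eq_sum_card_fiberwise hmaps]
  refine sum_congr rfl fun e he => congrArg card ?_
  rw [filter_filter]
  exact filter_congr fun v _ => ⟨And.right, fun h => ⟨h ▸ he, h⟩⟩

theorem card_spreadPairs_le_sum (S : Finset (Sym2 X)) (b : V → X) (I : Finset V) (z : X) :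
    (#(spreadPairs (edgeGraph S) b I z) : ℝ) ≤
      ∑ q ∈ I ×ˢ I with b q.1 ≠ b q.2, if {s(z, b q.1), s(z, b q.2)} ⊆ S then 1 else 0 := by
  rw [sum_boole, filter_filter]
  refine Nat.cast_le.2 (card_le_card fun q hq => ?_)
  obtain ⟨hq, hne, hu, hv⟩ := mem_filter.1 hq
  rw [SimpleGraph.fromEdgeSet_adj] at hu hv
  exact mem_filter.2 ⟨hq, hne, by simpa [insert_subset_iff] using ⟨hu.1, hv.1⟩⟩

theorem exp_lowSpread_le (hl : 0 ≤ l) (hlΛ : l * Λ ≤ μ) (S : Finset (Sym2 X)) (b : V → X)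
    (I : Finset V) (z : X) :
    exp (l * lowSpread (edgeGraph S) b I Λ z) ≤
      1 + l * ∑ q ∈ I ×ˢ I with b q.1 ≠ b q.2,
        (if {s(z, b q.1), s(z, b q.2)} ⊆ S then 1 else 0) *
          exp (μ * nbrCount (edgeGraph S) b I z) := by
  rw [← sum_mul, ← mul_assoc]
  have hspread : (#(spreadPairs (edgeGraph S) b I z) : ℝ) ≤
      (nbrCount (edgeGraph S) b I z : ℝ) ^ 2 := mod_cast card_spreadPairs_le (edgeGraph S) b I z
  set w : ℝ := (nbrCount (edgeGraph S) b I z : ℝ)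
  set q : ℝ := (#(spreadPairs (edgeGraph S) b I z) : ℝ)
  have hsum := card_spreadPairs_le_sum S b I z
  have hsum0 : 0 ≤ l * ∑ q ∈ I ×ˢ I with b q.1 ≠ b q.2,
      if {s(z, b q.1), s(z, b q.2)} ⊆ S then 1 else 0 :=
    mul_nonneg hl ((Nat.cast_nonneg _).trans hsum)
  rw [lowSpread]
  split_ifs with hlow
  · have hwΛ : w ≤ Λ := Nat.cast_le.2 hlow.le
    have exponent_le : l * q ≤ μ * w := by
      calc l * q ≤ l * (w * w) := by rw [← sq]; gcongr
        _ ≤ l * (Λ * w) := by gcongr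
        _ = l * Λ * w := (mul_assoc ..).symm
        _ ≤ μ * w := by gcongr
    have exp_le : exp (l * q) ≤ 1 + l * q * exp (l * q) := by
      have h := add_one_le_exp (-(l * q))
      have hinv : exp (-(l * q)) * exp (l * q) = 1 := by rw [← exp_add, neg_add_cancel, exp_zero]
      nlinarith [exp_pos (l * q)]
    exact exp_le.trans (by gcongr)
  · rw [Nat.cast_zero, mul_zero, exp_zero]
    exact le_add_of_nonneg_right (mul_nonneg hsum0 (exp_pos _).le)

variable [Fintype X]

theorem sum_starMultiplicity (b : V → X) (I : Finset V) (z : X) :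
    ∑ e, starMultiplicity b I z e = #I :=
  (card_eq_sum_card_fiberwise fun _ _ => mem_univ _).symm

theorem bernExp_exp_nbrCount_le (hp : p ∈ Set.Icc 0 1) (hμ : 0 ≤ μ) (hμF : μ * F ≤ 1)
    (hF : ∀ x, #{v ∈ I | b v = x} ≤ F) (hz : z ∉ I.image b) (T : Finset (Sym2 X)) :
    bernExp p (fun S => (if T ⊆ S then 1 else 0) * exp (μ * nbrCount (edgeGraph S) b I z)) ≤
      (p * exp 1) ^ #T * exp (2 * p * μ * #I) := by
  have hω (e : Sym2 X) : μ * starMultiplicity b I z e ∈ Set.Icc 0 1 :=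
    ⟨by positivity, (mul_le_mul_of_nonneg_left
      (Nat.cast_le.2 (starMultiplicity_le hF e)) hμ).trans hμF⟩
  have h := bernExp_subset_mul_exp_sum_le hp hω T
  simp only [← mul_sum, ← Nat.cast_sum, sum_starMultiplicity, ← mul_assoc] at h
  simpa only [nbrCount_eq_sum_starMultiplicity _ hz] using h

theorem bernExp_exp_lowSpread_le (hp : p ∈ Set.Icc 0 1) (hl : 0 ≤ l) (hlΛ : l * Λ ≤ μ)
    (hμF : μ * F ≤ 1) (hF : ∀ x, #{v ∈ I | b v = x} ≤ F) (hz : z ∉ I.image b) :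
    bernExp p (fun S => exp (l * lowSpread (edgeGraph S) b I Λ z)) ≤
      exp (l * (#I ^ 2 * ((p * exp 1) ^ 2 * exp (2 * p * μ * #I)))) := by
  have hμ : 0 ≤ μ := le_trans (by positivity) hlΛ
  refine (bernExp_mono hp fun S => exp_lowSpread_le hl hlΛ S b I z).trans ?_
  rw [bernExp_add, bernExp_const, bernExp_const_mul, bernExp_sum, add_comm]
  refine le_trans ?_ (add_one_le_exp _)
  gcongr
  refine (sum_le_card_nsmul _ _ _ fun q hq => (bernExp_exp_nbrCount_le hp hμ hμF hF hz _).trans_eq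
    (by rw [card_pair (mt Sym2.congr_right.1 (mem_filter.1 hq).2)])).trans ?_
  rw [nsmul_eq_mul]
  gcongr
  rw [sq]
  exact_mod_cast (card_filter_le _ _).trans_eq (card_product _ _)

/-- The stars joining the points outside `I.image b` to `I.image b` are edge-disjoint. -/
theorem bernExp_prod_lowSpread (p : ℝ) (g : ℕ → ℝ) (b : V → X) (I : Finset V) (Λ : ℕ)
    {Y : Finset X} (hY : Disjoint Y (I.image b)) :
    bernExp p (fun S => ∏ z ∈ Y, g (lowSpread (edgeGraph S) b I Λ z)) =
      ∏ z ∈ Y, bernExp p (fun S => g (lowSpread (edgeGraph S) b I Λ z)) := by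
  induction Y using Finset.induction_on with
  | empty => simp only [prod_empty, bernExp_const]
  | insert z Y hz ih =>
    obtain ⟨-, hY⟩ := disjoint_insert_left.1 hY
    rw [prod_insert hz, ← ih hY]
    simp only [prod_insert hz]
    refine bernExp_mul_of_disjoint p (I.image fun v => s(z, b v)) (fun S => ?_) fun S => ?_
    · refine congrArg g (lowSpread_congr fun v hv => ?_)
      rw [mem_inter, and_iff_left (mem_image_of_mem _ hv)]
    · refine prod_congr rfl fun z' hz' => congrArg g (lowSpread_congr fun v _ => ?_)
      rw [mem_sdiff, and_iff_left]
      simp only [mem_image, not_exists, not_and]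
      intro u hu heq
      rcases Sym2.eq_iff.1 heq with ⟨h, -⟩ | ⟨-, h⟩
      · exact hz (h ▸ hz')
      · exact disjoint_left.1 hY hz' (h ▸ mem_image_of_mem b hu)

theorem bernProb_lt_sum_lowSpread_le (hp : p ∈ Set.Icc 0 1) (hl : 0 ≤ l) (hlΛ : l * Λ ≤ μ)
    (hμF : μ * F ≤ 1) (hF : ∀ x, #{v ∈ I | b v = x} ≤ F) (M : ℕ) :
    bernProb p (fun S => M < ∑ z ∈ (I.image b)ᶜ, lowSpread (edgeGraph S) b I Λ z) ≤
      exp (-(l * M) + l * (Fintype.card X *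
        (#I ^ 2 * ((p * exp 1) ^ 2 * exp (2 * p * μ * #I))))) := by
  have := hp.1
  set R : ℝ := #I ^ 2 * ((p * exp 1) ^ 2 * exp (2 * p * μ * #I))
  calc _ ≤ bernExp p (fun S => exp (-(l * M)) *
        ∏ z ∈ (I.image b)ᶜ, exp (l * lowSpread (edgeGraph S) b I Λ z)) := by
        refine bernProb_le_bernExp hp (fun S => by positivity) fun S hS => ?_
        rw [← exp_sum, ← exp_add, ← mul_sum, ← Nat.cast_sum]
        have hM := mul_le_mul_of_nonneg_left (Nat.cast_le (α := ℝ).2 hS.le) hl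
        exact one_le_exp (by linarith)
    _ = exp (-(l * M)) *
        ∏ z ∈ (I.image b)ᶜ, bernExp p (fun S => exp (l * lowSpread (edgeGraph S) b I Λ z)) := by
        rw [bernExp_const_mul,
          bernExp_prod_lowSpread p (fun t => exp (l * t)) b I Λ disjoint_compl_left]
    _ ≤ exp (-(l * M)) * ∏ _z ∈ (I.image b)ᶜ, exp (l * R) := by
        gcongr with z hz
        · exact fun z _ => bernExp_nonneg hp fun _ => (exp_pos _).le
        · exact bernExp_exp_lowSpread_le hp hl hlΛ hμF hF (mem_compl.1 hz)
    _ ≤ _ := by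
        rw [prod_const, ← exp_nat_mul, ← exp_add, mul_left_comm]
        gcongr
        exact card_le_univ _

end LowSpread

section CertificateWeight

open Finset Real

/-- The parameters `u`, `v` count the free regular elements and `y`, `x` the centered elements for
the two colours. -/
theorem two_colour_tradeoff {k u v x y r₁ r₂ Q₁ Q₂ : ℝ} (hk : 0 ≤ k) (hu : 0 ≤ u) (hv : 0 ≤ v)
    (huy : u + y ≤ k) (hvx : v + x ≤ k) (hur : u ≤ r₁) (hvr : v ≤ r₂)
    (hQ₁ : Q₁ ≤ 0.42 * k * x) (hQ₂ : Q₂ ≤ 0.42 * k * y) :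
    k * (u + v - 0.98 * k) ≤ 0.585 * ((r₁ ^ 2 - Q₁) + (r₂ ^ 2 - Q₂)) := by
  have hu₂ : u ^ 2 ≤ r₁ ^ 2 := by gcongr
  have hv₂ : v ^ 2 ≤ r₂ ^ 2 := by gcongr
  have hx : k * x ≤ k * (k - v) := mul_le_mul_of_nonneg_left (by linarith) hk
  have hy : k * y ≤ k * (k - u) := mul_le_mul_of_nonneg_left (by linarith) hk
  -- the difference of the two sides is a quadratic form in `u + v` and `k` of negative discriminant
  linarith [sq_nonneg (u - v), sq_nonneg (u + v - 7543 / 5850 * k), sq_nonneg k]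

variable {V X : Type*} [DecidableEq X] [Fintype X] {a b : V → X} {I I₁ I₂ : Finset V}
  {Z₁ Z₂ : Finset X} {q D : ℕ} {φ₁ φ₂ : X → Label X}

theorem IsLabelling.mul_le_card_openPairs_add (hI₁ : IsTransversal a I I₁)
    (hI₂ : IsTransversal b I I₂) (hφ₁ : IsLabelling a I Z₁ q D φ₁)
    (hφ₂ : IsLabelling b I Z₂ q D φ₂) (hD : (D : ℝ) ≤ 0.42 * #I) :
    (#I : ℝ) * (#(I.image a) + #(I.image b) - #(labelEdges φ₁) - #(labelEdges φ₂) - 4 * q -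
      0.98 * #I) ≤ 1.17 * (#(openPairs a b I₁ φ₁ φ₂) + #(openPairs b a I₂ φ₂ φ₁) + #I) := by
  have hR₁ := (regularPart_subset a b I₁ φ₁ φ₂).trans hI₁.subset
  have hR₂ := (regularPart_subset b a I₂ φ₂ φ₁).trans hI₂.subset
  have himage₁ := hφ₁.card_image_le hφ₂ hI₁
  have himage₂ := hφ₂.card_image_le hφ₁ hI₂
  have hfree₁ := card_centeredPart_add_card_free_le (a := a) φ₁ hR₁
  have hfree₂ := card_centeredPart_add_card_free_le (a := b) φ₂ hR₂
  have hopen₁ := card_regularPart_sq_le (b := b) (φ₁ := φ₁) (φ₂ := φ₂) hI₁.injOn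
  have hopen₂ := card_regularPart_sq_le (b := a) (φ₁ := φ₂) (φ₂ := φ₁) hI₂.injOn
  have hcentered₁ := hφ₂.sum_card_filter_eq_center_sq_le_mul hR₁
  have hcentered₂ := hφ₁.sum_card_filter_eq_center_sq_le_mul hR₂
  have hsub₁ := card_filter_le (regularPart a b I₁ φ₁ φ₂) fun v => φ₁ (a v) = .free
  have hsub₂ := card_filter_le (regularPart b a I₂ φ₂ φ₁) fun v => φ₂ (b v) = .free
  have hcard₁ := card_le_card hR₁
  have hcard₂ := card_le_card hR₂
  rify at himage₁ himage₂ hfree₁ hfree₂ hopen₁ hopen₂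
  rify at hcentered₁ hcentered₂ hsub₁ hsub₂ hcard₁ hcard₂
  have tradeoff := two_colour_tradeoff (Nat.cast_nonneg #I) (Nat.cast_nonneg _)
    (Nat.cast_nonneg _) hfree₁ hfree₂ hsub₁ hsub₂
    (hcentered₁.trans (mul_le_mul_of_nonneg_right hD (Nat.cast_nonneg _)))
    (hcentered₂.trans (mul_le_mul_of_nonneg_right hD (Nat.cast_nonneg _)))
  refine (mul_le_mul_of_nonneg_left (sub_le_sub_right (?_ : _ ≤ _ + _) _)
    (Nat.cast_nonneg _)).trans (tradeoff.trans ?_) <;> linarith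

theorem mul_add_sub_mul_le_of_tradeoff {k g h s w N E : ℝ} (hk : 0 < k) (hh : 0 ≤ h) (hhg : h ≤ g)
    (hs : 0 ≤ s) (hN : 0 ≤ N) (hw : k * (w - 0.98 * k) ≤ 1.17 * (N + k))
    (hgs : 1.17 * g ≤ s * k) (hE : E + 0.98 * g * k + s * k ≤ 2 * h * k) :
    h * w + E - s * N ≤ 2 * h * k := by
  have hg : 0 ≤ g := hh.trans hhg
  rcases le_total w 0 with hw₀ | hw₀
  · have hhw : h * w ≤ 0 := mul_nonpos_of_nonneg_of_nonpos hh hw₀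
    have : 0 ≤ s * N := by positivity
    have : 0 ≤ 0.98 * g * k := by positivity
    have : 0 ≤ s * k := by positivity
    linarith
  · have hgw : g * (w - 0.98 * k) ≤ s * (N + k) := by
      refine le_of_mul_le_mul_left ?_ hk
      calc k * (g * (w - 0.98 * k)) = g * (k * (w - 0.98 * k)) := by ring
        _ ≤ g * (1.17 * (N + k)) := by gcongr
        _ = 1.17 * g * (N + k) := by ring
        _ ≤ s * k * (N + k) := by gcongr
        _ = k * (s * (N + k)) := by ring
    have hhw : h * w ≤ g * w := mul_le_mul_of_nonneg_right hhg hw₀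
    linarith

omit [Fintype X] in
theorem cast_imageDefect (a : V → X) (I : Finset V) :
    (imageDefect a I : ℝ) = #I - #(I.image a) :=
  Nat.cast_sub card_image_le

theorem IsLabelling.weight_mul_weight_le (hI₁ : IsTransversal a I I₁) (hI₂ : IsTransversal b I I₂)
    (hφ₁ : IsLabelling a I Z₁ q D φ₁) (hφ₂ : IsLabelling b I Z₂ q D φ₂)
    (hD : (D : ℝ) ≤ 0.42 * #I) (hI : 0 < #I) {p g h s u B : ℝ} (hp : 0 ≤ p) (hph : p ≤ exp (-h))
    (hh : 0 ≤ h) (hhg : h ≤ g) (hs : 0 ≤ s) (hgs : 1.17 * g ≤ s * #I)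
    (hB : B + 2 * u + 4 * q * h + 0.98 * g * #I + s * #I ≤ 2 * h * #I) :
    p ^ #(labelEdges φ₁) * exp (u - s * #(openPairs a b I₁ φ₁ φ₂)) *
      (p ^ #(labelEdges φ₂) * exp (u - s * #(openPairs b a I₂ φ₂ φ₁))) ≤
      exp h ^ (imageDefect a I + imageDefect b I) * exp (-B) := by
  have pow_le (T : ℕ) : p ^ T ≤ exp (-(h * T)) := by
    refine (pow_le_pow_left₀ hp hph T).trans_eq ?_
    rw [← exp_nat_mul]; ring_nf
  have exponent_le := mul_add_sub_mul_le_of_tradeoff (E := B + 2 * u + 4 * q * h)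
    (Nat.cast_pos.2 hI) hh hhg hs (by positivity)
    (IsLabelling.mul_le_card_openPairs_add hI₁ hI₂ hφ₁ hφ₂ hD) hgs hB
  calc _ ≤ exp (-(h * #(labelEdges φ₁))) * exp (u - s * #(openPairs a b I₁ φ₁ φ₂)) *
        (exp (-(h * #(labelEdges φ₂))) * exp (u - s * #(openPairs b a I₂ φ₂ φ₁))) := by
        gcongr <;> exact pow_le _
    _ = exp (-(h * #(labelEdges φ₁)) + (u - s * #(openPairs a b I₁ φ₁ φ₂)) +
        (-(h * #(labelEdges φ₂)) + (u - s * #(openPairs b a I₂ φ₂ φ₁)))) := by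
        simp only [exp_add]
    _ ≤ exp ((imageDefect a I + imageDefect b I : ℕ) * h + -B) := by
        rw [exp_le_exp]
        push_cast [cast_imageDefect]
        linarith
    _ = _ := by rw [exp_add, exp_nat_mul]

end CertificateWeight

section SecondExposure

open Finset Real

/-- The bounds that define the typical behaviour of the two random graphs, relative to a set of
vertices. -/
structure Thresholds where
  /-- the size of the fibers of the two maps -/
  fiber : ℕ
  /-- the codegree of two points -/
  codegree : ℕ
  /-- the degree of a point -/
  degree : ℕ
  /-- the number of centers -/
  centers : ℕ
  /-- the weight from which on a point has to be a center -/
  low : ℕ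
  /-- the number of disjoint triangles with an edge inside the image -/
  packing : ℕ
  /-- the number of edges inside the image -/
  within : ℕ
  /-- the number of spread pairs at points of low weight -/
  spread : ℕ
  /-- the number of edges of one graph over low pairs of the other -/
  crossing : ℕ

namespace Thresholds

/-- The number of elements of the vertex set over exceptional points. -/
def exceptional (t : Thresholds) : ℕ := t.fiber * (t.centers + t.centers ^ 2 * t.codegree)

/-- The number of elements of the vertex set over points with a given center. -/
def perCenter (t : Thresholds) : ℕ := t.fiber * t.degree

/-- The number of edges among the open pairs. -/
def openEdges (t : Thresholds) : ℕ := 3 * t.packing + t.crossing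

/-- The number of low pairs in a vertex set of size `k`. -/
def lowPairs (t : Thresholds) (k : ℕ) : ℕ :=
  k * t.fiber + t.low * (t.fiber * (2 * t.within)) + t.spread

end Thresholds

variable {V X : Type*} [DecidableEq X] [Fintype X]

/-- Both graphs contain the edges that the labelling of their colour asserts, and at most `M` edges
among the open pairs. -/
def RealizesLabellings (a b : V → X) (I : Finset V) (φ₁ φ₂ : X → Label X) (M : ℕ)
    (S₁ S₂ : Finset (Sym2 X)) : Prop :=
  (labelEdges φ₁ ⊆ S₁ ∧ #(S₁ ∩ openPairs a b (transversal a I) φ₁ φ₂) ≤ M) ∧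
    (labelEdges φ₂ ⊆ S₂ ∧ #(S₂ ∩ openPairs b a (transversal b I) φ₂ φ₁) ≤ M)

/-- The configuration that a typical pair of graphs has to contain if `I` is independent in the
two-bite graph: a labelling for each colour, with few edges among its open pairs. -/
def HasCertificate (a b : V → X) (I : Finset V) (t : Thresholds) (S₁ S₂ : Finset (Sym2 X)) :
    Prop :=
  ∃ Z₁ Z₂ φ₁ φ₂, #Z₁ = t.centers ∧ #Z₂ = t.centers ∧
    IsLabelling a I Z₁ t.exceptional t.perCenter φ₁ ∧
    IsLabelling b I Z₂ t.exceptional t.perCenter φ₂ ∧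
    RealizesLabellings a b I φ₁ φ₂ t.openEdges S₁ S₂

/-- The exceptional event for `I` in which one of the thresholds is exceeded. It refers to the
triangles of the first graph and the pairs with a common neighbour in the second. -/
def IsAtypical (a b : V → X) (I : Finset V) (t : Thresholds) (S₁ S₂ : Finset (Sym2 X)) : Prop :=
  (∃ 𝒯, IsTrianglePacking S₁ 𝒯 ∧ 𝒯 ⊆ trianglesMeeting (I.image a) ∧ t.packing + 1 ≤ #𝒯) ∨
  t.within < #(S₂ ∩ (I.image b).sym2) ∨
  t.spread < ∑ z ∈ (I.image b)ᶜ, lowSpread (edgeGraph S₂) b I t.low z ∨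
  (#(lowPairs (edgeGraph S₂) b I t.low) ≤ t.lowPairs #I ∧
    t.crossing < #(S₁ ∩ (lowPairs (edgeGraph S₂) b I t.low).image fun q => s(a q.1, a q.2)))

/-- The exceptional event in which the graph has a large degree or codegree. -/
def IsIrregular (t : Thresholds) (S : Finset (Sym2 X)) : Prop :=
  (¬ Pairwise fun z z' => codegree (edgeGraph S) z z' ≤ t.codegree) ∨
    ∃ z, t.degree < (edgeGraph S).degree z

/-- The pairs of a set of `ζ` centers and a map that can be a labelling of `A` with respect to
these centers. -/
noncomputable def labellingCandidates (A : Finset X) (ζ : ℕ) :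
    Finset ((_ : Finset X) × (X → Label X)) :=
  (powersetCard ζ univ).sigma fun Z => Fintype.piFinset fun x =>
    if x ∈ A then insert .exceptional (insert .free (Z.image .center)) else {.exceptional}

theorem card_labellingCandidates_le (A : Finset X) (ζ : ℕ) :
    #(labellingCandidates A ζ) ≤ Fintype.card X ^ ζ * (ζ + 2) ^ #A := by
  have card_labels_le : ∀ Z ∈ powersetCard ζ (univ : Finset X),
      #(insert .exceptional (insert .free (Z.image .center)) : Finset (Label X)) ≤ ζ + 2 :=
    fun Z hZ => (card_insert_le _ _).trans (Nat.succ_le_succ ((card_insert_le _ _).trans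
      (Nat.succ_le_succ (card_image_le.trans_eq (mem_powersetCard.1 hZ).2))))
  rw [labellingCandidates, card_sigma]
  refine (sum_le_card_nsmul _ _ ((ζ + 2) ^ #A) fun Z hZ => ?_).trans ?_
  · rw [Fintype.card_piFinset]
    calc _ ≤ ∏ x, if x ∈ A then ζ + 2 else 1 := by
          refine prod_le_prod' fun x _ => ?_
          split_ifs
          · exact card_labels_le Z hZ
          · rw [card_singleton]
      _ = (ζ + 2) ^ #A := by rw [prod_ite_mem, univ_inter, prod_const]
  · rw [smul_eq_mul, card_powersetCard, card_univ]
    exact Nat.mul_le_mul_right _ (Nat.choose_le_pow _ _)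

theorem IsLabelling.mem_labellingCandidates {a : V → X} {I : Finset V} {Z : Finset X} {q D : ℕ}
    {φ : X → Label X} (hφ : IsLabelling a I Z q D φ) :
    (⟨Z, φ⟩ : (_ : Finset X) × (X → Label X)) ∈ labellingCandidates (I.image a) #Z := by
  rw [labellingCandidates, mem_sigma]
  refine ⟨mem_powersetCard.2 ⟨subset_univ _, rfl⟩, Fintype.mem_piFinset.2 fun x => ?_⟩
  dsimp only
  by_cases hx : x ∈ I.image a
  · rw [if_pos hx]
    cases hφx : φ x with
    | exceptional => exact mem_insert_self _ _
    | free => exact mem_insert_of_mem (mem_insert_self _ _)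
    | center z => exact mem_insert_of_mem (mem_insert_of_mem
        (mem_image_of_mem _ (hφ.mem_of_eq_center x z hφx)))
  · rw [if_neg hx, mem_singleton]
    exact hφ.eq_exceptional_of_notMem_image x hx

variable {a b : V → X} {I : Finset V} {t : Thresholds} {p : ℝ}

theorem IsLabelling.pairProb_realizesLabellings_le {Z₁ Z₂ : Finset X} {q D M : ℕ}
    {φ₁ φ₂ : X → Label X} (hφ₁ : IsLabelling a I Z₁ q D φ₁) (hφ₂ : IsLabelling b I Z₂ q D φ₂)
    (hp : p ∈ Set.Icc 0 1) (hI : 0 < #I) (hD : (D : ℝ) ≤ 0.42 * #I) {l g h B : ℝ} (hl : 0 ≤ l)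
    (hph : p ≤ exp (-h)) (hh : 0 ≤ h) (hhg : h ≤ g) (hgp : 1.17 * g ≤ p * (1 - exp (-l)) * #I)
    (hB : B + 2 * (l * M) + 4 * q * h + 0.98 * g * #I + p * (1 - exp (-l)) * #I ≤ 2 * h * #I) :
    pairProb p (RealizesLabellings a b I φ₁ φ₂ M) ≤
      exp h ^ (imageDefect a I + imageDefect b I) * exp (-B) := by
  have hs : 0 ≤ p * (1 - exp (-l)) :=
    mul_nonneg hp.1 (sub_nonneg.2 (exp_le_one_iff.2 (neg_nonpos.2 hl)))
  refine (pairProb_and p (fun S => labelEdges φ₁ ⊆ S ∧ #(S ∩ openPairs a b _ φ₁ φ₂) ≤ M)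
    fun S => labelEdges φ₂ ⊆ S ∧ #(S ∩ openPairs b a _ φ₂ φ₁) ≤ M).trans_le ?_
  simp only [← Nat.cast_le (α := ℝ)]
  refine (mul_le_mul
    (bernProb_subset_and_card_inter_le hp hl (hφ₁.disjoint_labelEdges_openPairs _ _) _)
    (bernProb_subset_and_card_inter_le hp hl (hφ₂.disjoint_labelEdges_openPairs _ _) _)
    (bernProb_nonneg hp _) (mul_nonneg (pow_nonneg hp.1 _) (exp_nonneg _))).trans ?_
  exact IsLabelling.weight_mul_weight_le (isTransversal_transversal a I)
    (isTransversal_transversal b I) hφ₁ hφ₂ hD hI hp.1 hph hh hhg hs hgp hB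

theorem pairProb_hasCertificate_le (hp : p ∈ Set.Icc 0 1) (hI : 0 < #I)
    (hD : (t.perCenter : ℝ) ≤ 0.42 * #I) {l g h B : ℝ} (hl : 0 ≤ l) (hph : p ≤ exp (-h))
    (hh : 0 ≤ h) (hhg : h ≤ g) (hgp : 1.17 * g ≤ p * (1 - exp (-l)) * #I)
    (hB : B + 2 * (l * t.openEdges) + 4 * t.exceptional * h + 0.98 * g * #I +
      p * (1 - exp (-l)) * #I ≤ 2 * h * #I) :
    pairProb p (HasCertificate a b I t) ≤
      ((Fintype.card X : ℝ) ^ t.centers * (t.centers + 2) ^ #I) ^ 2 *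
        (exp h ^ (imageDefect a I + imageDefect b I) * exp (-B)) := by
  classical
  let candidates := {c ∈ labellingCandidates (I.image a) t.centers ×ˢ
      labellingCandidates (I.image b) t.centers |
    IsLabelling a I c.1.1 t.exceptional t.perCenter c.1.2 ∧
      IsLabelling b I c.2.1 t.exceptional t.perCenter c.2.2}
  have card_le (f : V → X) : #(labellingCandidates (I.image f) t.centers) ≤
      Fintype.card X ^ t.centers * (t.centers + 2) ^ #I :=
    (card_labellingCandidates_le _ _).trans (Nat.mul_le_mul_left _
      (Nat.pow_le_pow_right (by omega) card_image_le))
  have card_candidates_le : #candidates ≤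
      (Fintype.card X ^ t.centers * (t.centers + 2) ^ #I) ^ 2 := by
    rw [sq]
    exact (card_filter_le _ _).trans ((card_product _ _).trans_le
      (Nat.mul_le_mul (card_le a) (card_le b)))
  calc pairProb p (HasCertificate a b I t)
      ≤ pairProb p (fun S₁ S₂ => ∃ c ∈ candidates,
          RealizesLabellings a b I c.1.2 c.2.2 t.openEdges S₁ S₂) := by
        refine pairProb_mono hp ?_
        rintro S₁ S₂ ⟨Z₁, Z₂, φ₁, φ₂, hZ₁, hZ₂, hφ₁, hφ₂, hreal⟩
        exact ⟨(⟨Z₁, φ₁⟩, ⟨Z₂, φ₂⟩), mem_filter.2 ⟨mem_product.2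
          ⟨hZ₁ ▸ hφ₁.mem_labellingCandidates, hZ₂ ▸ hφ₂.mem_labellingCandidates⟩, hφ₁, hφ₂⟩, hreal⟩
    _ ≤ ∑ c ∈ candidates, pairProb p (RealizesLabellings a b I c.1.2 c.2.2 t.openEdges) :=
        pairProb_exists_le hp _ _
    _ ≤ #candidates • _ := sum_le_card_nsmul _ _ _ fun c hc =>
        (mem_filter.1 hc).2.1.pairProb_realizesLabellings_le (mem_filter.1 hc).2.2 hp hI hD hl hph
          hh hhg hgp hB
    _ ≤ _ := by
        rw [nsmul_eq_mul]
        gcongr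
        exact_mod_cast card_candidates_le

theorem pairProb_isAtypical_le (hp : p ∈ Set.Icc 0 1) (hF : ∀ x, #{v ∈ I | b v = x} ≤ t.fiber)
    {μ l₀ l₁ l₂ : ℝ} (hl₀ : 0 ≤ l₀) (hl₁ : 0 ≤ l₁) (hl₂ : 0 ≤ l₂) (hlow : l₀ * t.low ≤ μ)
    (hμ : μ * t.fiber ≤ 1) :
    pairProb p (IsAtypical a b I t) ≤
      ((#I ^ 2 * Fintype.card X).choose (t.packing + 1) : ℝ) * p ^ (3 * (t.packing + 1)) +
      (exp (-(l₁ * t.within) + p * (exp l₁ - 1) * (#I : ℝ) ^ 2) +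
      (exp (-(l₀ * t.spread) + l₀ * (Fintype.card X *
        (#I ^ 2 * ((p * exp 1) ^ 2 * exp (2 * p * μ * #I))))) +
      exp (-(l₂ * t.crossing) + p * (exp l₂ - 1) * t.lowPairs #I))) := by
  have hp0 := hp.1
  have hexp : 0 ≤ exp l₁ - 1 := sub_nonneg.2 (one_le_exp hl₁)
  refine (pairProb_or_le hp _ _).trans (add_le_add ?_ ((pairProb_or_le hp _ _).trans
    (add_le_add ?_ ((pairProb_or_le hp _ _).trans (add_le_add ?_ ?_)))))
  · refine pairProb_le_of_forall_right hp fun _ =>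
      (bernProb_exists_isTrianglePacking_le hp _ _).trans ?_
    gcongr
    exact card_image_le
  · refine pairProb_le_of_forall_left hp fun _ =>
      (bernProb_lt_card_inter_sym2_le hp hl₁ _ _).trans ?_
    gcongr
    exact card_image_le
  · exact pairProb_le_of_forall_left hp fun _ =>
      bernProb_lt_sum_lowSpread_le hp hl₀ hlow hμ hF _
  · exact pairProb_lt_card_inter_image_lowPairs_le hp hl₂ a b I _ _ _

theorem bernProb_isIrregular_le (hp : p ∈ Set.Icc 0 1) {l : ℝ} (hl : 0 ≤ l) :
    bernProb p (fun S : Finset (Sym2 X) => IsIrregular t S) ≤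
      (Fintype.card X : ℝ) ^ 2 * (Fintype.card X * p ^ 2) ^ (t.codegree + 1) +
      Fintype.card X * exp (-(l * t.degree) + p * (exp l - 1) * Fintype.card X) :=
  (bernProb_or_le hp _ _).trans (add_le_add (bernProb_not_pairwise_codegree_le hp _)
    (bernProb_exists_lt_degree_le hp hl _))

theorem pairProb_exists_powersetCard_le [Fintype V] {k : ℕ} {c : ℝ} (hp : p ∈ Set.Icc 0 1)
    {P : Finset V → Finset (Sym2 X) → Finset (Sym2 X) → Prop}
    (h : ∀ I, #I = k → pairProb p (P I) ≤ c) :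
    pairProb p (fun S₁ S₂ => ∃ I ∈ powersetCard k univ, P I S₁ S₂) ≤
      (Fintype.card V).choose k * c := by
  refine (pairProb_exists_le hp _ _).trans ((sum_le_card_nsmul _ _ c fun I hI =>
    h I (mem_powersetCard.1 hI).2).trans_eq ?_)
  rw [card_powersetCard, card_univ, nsmul_eq_mul]

end SecondExposure

section Combination

open Finset Real

variable {V X : Type*} [DecidableEq X] [Fintype X] {a b : V → X} {I : Finset V} {t : Thresholds}
  {S₁ S₂ : Finset (Sym2 X)}

theorem card_inter_openPairs_le_of_not_isAtypical {𝒯 : Finset (Finset X)} {G₂' : SimpleGraph X}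
    {Z : Finset X} (hF : ∀ x, #{v ∈ I | b v = x} ≤ t.fiber)
    (hI : (twoBite a b (edgeGraph (S₁ \ 𝒯.biUnion cliqueEdges)) (edgeGraph S₁) G₂'
      (edgeGraph S₂)).IsIndepSet I)
    (h𝒯 : IsTrianglePacking S₁ 𝒯) (htyp : ¬ IsAtypical a b I t S₁ S₂)
    (hZ : ∀ z, t.low ≤ nbrCount (edgeGraph S₂) b I z → z ∈ Z) (φ₁ : X → Label X) :
    #(S₁ ∩ openPairs a b (transversal a I) φ₁ (centerLabel (edgeGraph S₂) (I.image b) Z)) ≤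
      t.openEdges := by
  simp only [IsAtypical, not_or, not_and, not_lt] at htyp
  obtain ⟨hpacking, hwithin, hspread, hcrossing⟩ := htyp
  set 𝒯' := {T ∈ 𝒯 | 1 < #(T ∩ I.image a)}
  have h𝒯' : IsTrianglePacking S₁ 𝒯' := h𝒯.subset (filter_subset _ _)
  have card_packing : #𝒯' ≤ t.packing := by
    by_contra! hlarge
    refine hpacking ⟨𝒯', h𝒯', fun T hT => ?_, hlarge⟩
    exact mem_trianglesMeeting.2 ⟨h𝒯'.card_eq T hT, (mem_filter.1 hT).2⟩
  have card_removed : #(𝒯'.biUnion cliqueEdges) ≤ 3 * t.packing := by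
    refine (card_biUnion_le_card_mul _ _ 3 fun T hT =>
      (card_cliqueEdges_of_card_eq_three (h𝒯'.card_eq T hT)).le).trans ?_
    rw [mul_comm]
    exact Nat.mul_le_mul_left 3 card_packing
  have card_low : #(lowPairs (edgeGraph S₂) b I t.low) ≤ t.lowPairs #I := by
    refine (card_lowPairs_le hF t.low).trans ?_
    unfold Thresholds.lowPairs
    gcongr
  exact (card_le_card (inter_openPairs_subset φ₁ (isTransversal_transversal a I) hI hZ)).trans
    ((card_union_le _ _).trans (Nat.add_le_add card_removed (hcrossing card_low)))

theorem hasCertificate_of_isIndepSet {𝒯₁ 𝒯₂ : Finset (Finset X)}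
    (hFa : ∀ x, #{v ∈ I | a v = x} ≤ t.fiber) (hFb : ∀ x, #{v ∈ I | b v = x} ≤ t.fiber)
    (hcenters : #I + (t.centers + 1) ^ 2 * (t.fiber * t.codegree) < (t.centers + 1) * t.low)
    (hX : t.centers ≤ Fintype.card X)
    (hI : (twoBite a b (edgeGraph (S₁ \ 𝒯₁.biUnion cliqueEdges)) (edgeGraph S₁)
      (edgeGraph (S₂ \ 𝒯₂.biUnion cliqueEdges)) (edgeGraph S₂)).IsIndepSet I)
    (h𝒯₁ : IsTrianglePacking S₁ 𝒯₁) (h𝒯₂ : IsTrianglePacking S₂ 𝒯₂)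
    (hreg₁ : ¬ IsIrregular t S₁) (hreg₂ : ¬ IsIrregular t S₂)
    (htyp₁ : ¬ IsAtypical a b I t S₁ S₂) (htyp₂ : ¬ IsAtypical b a I t S₂ S₁) :
    HasCertificate a b I t S₁ S₂ := by
  simp only [IsIrregular, not_or, not_not, not_exists, not_lt] at hreg₁ hreg₂
  obtain ⟨Z₁, hZ₁, hlow₁⟩ := exists_centers hFa hreg₁.1 hcenters hX
  obtain ⟨Z₂, hZ₂, hlow₂⟩ := exists_centers hFb hreg₂.1 hcenters hX
  have hφ₁ := isLabelling_centerLabel hFa hreg₁.1 hreg₁.2 Z₁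
  have hφ₂ := isLabelling_centerLabel hFb hreg₂.1 hreg₂.2 Z₂
  rw [hZ₁] at hφ₁
  rw [hZ₂] at hφ₂
  refine ⟨Z₁, Z₂, _, _, hZ₁, hZ₂, hφ₁, hφ₂, ⟨labelEdges_centerLabel_subset _ _ _, ?_⟩,
    labelEdges_centerLabel_subset _ _ _, ?_⟩
  · exact card_inter_openPairs_le_of_not_isAtypical hFb hI h𝒯₁ htyp₁ hlow₂ _
  · rw [twoBite_swap] at hI
    exact card_inter_openPairs_le_of_not_isAtypical hFa hI h𝒯₂ htyp₂ hlow₁ _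

theorem exists_cliqueFree_of_not_hasCertificate [Fintype V] {k : ℕ}
    (hFa : ∀ x, #{v | a v = x} ≤ t.fiber) (hFb : ∀ x, #{v | b v = x} ≤ t.fiber)
    (hcenters : k + (t.centers + 1) ^ 2 * (t.fiber * t.codegree) < (t.centers + 1) * t.low)
    (hX : t.centers ≤ Fintype.card X)
    (hcert : ∀ I ∈ powersetCard k univ, ¬ HasCertificate a b I t S₁ S₂)
    (htyp₁ : ∀ I ∈ powersetCard k univ, ¬ IsAtypical a b I t S₁ S₂)
    (htyp₂ : ∀ I ∈ powersetCard k univ, ¬ IsAtypical b a I t S₂ S₁)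
    (hreg₁ : ¬ IsIrregular t S₁) (hreg₂ : ¬ IsIrregular t S₂) :
    ∃ G : SimpleGraph V, G.CliqueFree 3 ∧ ∀ I : Finset V, #I = k → ¬ G.IsIndepSet I := by
  obtain ⟨𝒯₁, h𝒯₁, hfree₁⟩ := exists_isTrianglePacking_cliqueFree S₁
  obtain ⟨𝒯₂, h𝒯₂, hfree₂⟩ := exists_isTrianglePacking_cliqueFree S₂
  refine ⟨twoBite a b (edgeGraph (S₁ \ 𝒯₁.biUnion cliqueEdges)) (edgeGraph S₁)
      (edgeGraph (S₂ \ 𝒯₂.biUnion cliqueEdges)) (edgeGraph S₂),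
    twoBite_cliqueFree (SimpleGraph.fromEdgeSet_mono (coe_subset.2 sdiff_subset))
      (SimpleGraph.fromEdgeSet_mono (coe_subset.2 sdiff_subset)) hfree₁ hfree₂,
    fun I hI hindep => ?_⟩
  have hIk : I ∈ powersetCard k univ := mem_powersetCard.2 ⟨subset_univ _, hI⟩
  have fiber_le {f : V → X} (hf : ∀ x, #{v | f v = x} ≤ t.fiber) (x : X) :
      #{v ∈ I | f v = x} ≤ t.fiber :=
    (card_le_card (filter_subset_filter _ (subset_univ I))).trans (hf x)
  exact hcert I hIk (hasCertificate_of_isIndepSet (fiber_le hFa) (fiber_le hFb) (by rwa [hI]) hX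
    hindep h𝒯₁ h𝒯₂ hreg₁ hreg₂ (htyp₁ I hIk) (htyp₂ I hIk))

theorem exists_cliqueFree_of_pairProb_le [Fintype V] {k : ℕ} {p : ℝ} (hp : p ∈ Set.Icc 0 1)
    (hFa : ∀ x, #{v | a v = x} ≤ t.fiber) (hFb : ∀ x, #{v | b v = x} ≤ t.fiber)
    (hcenters : k + (t.centers + 1) ^ 2 * (t.fiber * t.codegree) < (t.centers + 1) * t.low)
    (hX : t.centers ≤ Fintype.card X)
    (hcert : pairProb p (fun S₁ S₂ => ∃ I ∈ powersetCard k univ, HasCertificate a b I t S₁ S₂)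
      ≤ 1 / 4)
    (hatyp₁ : pairProb p (fun S₁ S₂ => ∃ I ∈ powersetCard k univ, IsAtypical a b I t S₁ S₂)
      ≤ 1 / 8)
    (hatyp₂ : pairProb p (fun S₁ S₂ => ∃ I ∈ powersetCard k univ, IsAtypical b a I t S₁ S₂)
      ≤ 1 / 8)
    (hirr : bernProb p (fun S : Finset (Sym2 X) => IsIrregular t S) ≤ 1 / 8) :
    ∃ G : SimpleGraph V, G.CliqueFree 3 ∧ ∀ I : Finset V, #I = k → ¬ G.IsIndepSet I := by
  let cert (S₁ S₂ : Finset (Sym2 X)) := ∃ I ∈ powersetCard k univ, HasCertificate a b I t S₁ S₂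
  let atyp (a b : V → X) (S₁ S₂ : Finset (Sym2 X)) :=
    ∃ I ∈ powersetCard k univ, IsAtypical a b I t S₁ S₂
  have bad_lt_one : pairProb p (fun S₁ S₂ => cert S₁ S₂ ∨ atyp a b S₁ S₂ ∨ atyp b a S₂ S₁ ∨
      IsIrregular t S₁ ∨ IsIrregular t S₂) < 1 := by
    have hatyp₂' := (pairProb_swap p (atyp b a)).trans_le hatyp₂
    have hirr₁ : pairProb p (fun S₁ _ => IsIrregular t S₁) ≤ 1 / 8 :=
      pairProb_le_of_forall_right hp fun _ => hirr
    have hirr₂ : pairProb p (fun _ S₂ => IsIrregular t S₂) ≤ 1 / 8 :=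
      pairProb_le_of_forall_left hp fun _ => hirr
    refine lt_of_le_of_lt ((pairProb_or_le hp _ _).trans (add_le_add hcert
      ((pairProb_or_le hp _ _).trans (add_le_add hatyp₁ ((pairProb_or_le hp _ _).trans
      (add_le_add hatyp₂' ((pairProb_or_le hp _ _).trans
      (add_le_add hirr₁ hirr₂)))))))) (by norm_num)
  obtain ⟨S₁, S₂, hS⟩ := exists_not_of_pairProb_lt_one bad_lt_one
  simp only [cert, atyp, not_or, not_exists, not_and] at hS
  obtain ⟨hcert, hatyp₁, hatyp₂, hreg₁, hreg₂⟩ := hS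
  exact exists_cliqueFree_of_not_hasCertificate hFa hFb hcenters hX hcert hatyp₁ hatyp₂ hreg₁ hreg₂

end Combination

section Regime

open Finset Real

theorem exp_le_one_div_thirtyTwo {x : ℝ} (hx : x ≤ -31) : exp x ≤ 1 / 32 := by
  rw [one_div, ← neg_neg x, exp_neg]
  exact inv_anti₀ (by norm_num) (by linarith [add_one_le_exp (-x)])

theorem exp_two_hundredths_sub_one_le : exp 0.02 - 1 ≤ 0.02021 := by
  have taylor := exp_bound' (x := 0.02) (by norm_num) (by norm_num) (n := 3) (by norm_num)
  norm_num [sum_range_succ, Nat.factorial] at taylor ⊢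
  linarith

theorem exp_neg_four_le : exp (-4) ≤ 0.025 := by
  have forty_le : (40 : ℝ) ≤ exp 4 := by
    calc (40 : ℝ) ≤ 2.7 ^ 4 := by norm_num
      _ ≤ exp 1 ^ 4 := by gcongr; linarith [exp_one_gt_d9]
      _ = exp 4 := by rw [← exp_nat_mul]; norm_num
  rw [exp_neg]
  exact (inv_anti₀ (by norm_num) forty_le).trans (by norm_num)

theorem choose_le_exp_one_mul_div_pow (n s : ℕ) : (n.choose s : ℝ) ≤ (exp 1 * n / s) ^ s := by
  rcases s.eq_zero_or_pos with rfl | hs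
  · simp
  have hs₀ : (0 : ℝ) < s := Nat.cast_pos.2 hs
  calc (n.choose s : ℝ) ≤ n ^ s / s.factorial := Nat.choose_le_pow_div s n
    _ = (n / s : ℝ) ^ s * ((s : ℝ) ^ s / s.factorial) := by rw [div_pow]; field_simp
    _ ≤ (n / s : ℝ) ^ s * exp s := by
        gcongr
        exact pow_div_factorial_le_exp _ hs₀.le _
    _ = (exp 1 * n / s) ^ s := by rw [← exp_one_pow, ← mul_pow]; ring_nf

/-- The threshold for the spread pairs, relative to the number of all pairs. Its value keeps the
moment generating function at `20000` of the number of edges over low pairs under control. -/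
noncomputable def spreadDensity : ℝ := exp (-20000) / 4

theorem spreadDensity_pos : 0 < spreadDensity := by unfold spreadDensity; positivity

theorem spreadDensity_le_one : spreadDensity ≤ 1 := by
  have : exp (-20000) ≤ 1 := exp_le_one_iff.2 (by norm_num)
  unfold spreadDensity
  linarith

theorem exp_mul_spreadDensity : exp 20000 * spreadDensity = 1 / 4 := by
  rw [spreadDensity, exp_neg]
  field_simp

/-- The range of the parameters: `n` vertices, no independent set of size `k`, random graphs on `m`
points, `L = log n`, and maps with fibers of size approximately `N = n ^ (1 / 4000)`. -/
structure AsymptoticRegime (n k m : ℕ) (L N : ℝ) : Prop where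
  exp_L : exp L = n
  exp_N : exp (L / 4000) = N
  le_L : 10 ^ 10 ≤ L
  le_mul_N : 10 ^ 10 * L ^ 2 ≤ spreadDensity * N
  le_mul_k : 10 ^ 10 * N ^ 10 ≤ spreadDensity * k
  le_sq_k : 1.5 * n * L ≤ (k : ℝ) ^ 2
  sq_k_le : (k : ℝ) ^ 2 ≤ 1.6 * n * L
  le_m : n ≤ m * N
  m_le : m * N ≤ 1.001 * n

/-- The probability with which an edge belongs to one of the two random graphs. -/
noncomputable def edgeProb (k : ℕ) (L : ℝ) : ℝ := 0.6 * L / k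

namespace AsymptoticRegime

variable {L N x : ℝ} {n k m : ℕ}

theorem L_le_mul_N (hR : AsymptoticRegime n k m L N) : 10 ^ 10 * L ≤ spreadDensity * N :=
  le_trans (by nlinarith [hR.le_L]) hR.le_mul_N

theorem sq_L_le_N (hR : AsymptoticRegime n k m L N) : 10 ^ 10 * L ^ 2 ≤ N :=
  hR.le_mul_N.trans (mul_le_of_le_one_left (hR.exp_N ▸ exp_nonneg _) spreadDensity_le_one)

theorem L_le_N (hR : AsymptoticRegime n k m L N) : 10 ^ 10 * L ≤ N :=
  le_trans (by nlinarith [hR.le_L]) hR.sq_L_le_N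

theorem le_N (hR : AsymptoticRegime n k m L N) : 10 ^ 20 ≤ N := by
  linarith [hR.le_L, hR.L_le_N]

theorem pow_N_le (hR : AsymptoticRegime n k m L N) : 10 ^ 10 * N ^ 10 ≤ k :=
  hR.le_mul_k.trans (mul_le_of_le_one_left (Nat.cast_nonneg k) spreadDensity_le_one)

theorem le_k (hR : AsymptoticRegime n k m L N) : 10 ^ 10 ≤ (k : ℝ) := by
  have : 1 ≤ N ^ 10 := one_le_pow₀ (by linarith [hR.le_N])
  linarith [hR.pow_N_le]

theorem n_pos (hR : AsymptoticRegime n k m L N) : (0 : ℝ) < n :=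
  hR.exp_L ▸ exp_pos L

theorem pow_N_mul_k_le_n (hR : AsymptoticRegime n k m L N) : N ^ 9 * k ≤ n := by
  have hN := hR.le_N
  refine le_of_mul_le_mul_left ?_ (show 0 < N by linarith)
  have hkk : 10 ^ 10 * N ^ 10 * k ≤ 1.6 * n * L :=
    (mul_le_mul_of_nonneg_right hR.pow_N_le (Nat.cast_nonneg k)).trans ((sq _).ge.trans hR.sq_k_le)
  have hLN : (n : ℝ) * L ≤ n * N :=
    mul_le_mul_of_nonneg_left (by linarith [hR.le_L, hR.L_le_N]) hR.n_pos.le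
  have : 0 ≤ N ^ 10 * k := by positivity
  linarith [(by ring : N * (N ^ 9 * k) = N ^ 10 * k)]

theorem pow_N_mul_k_le_m (hR : AsymptoticRegime n k m L N) : N ^ 8 * k ≤ m := by
  refine le_of_mul_le_mul_left ?_ (show 0 < N by linarith [hR.le_N])
  linarith [hR.pow_N_mul_k_le_n, hR.le_m, (by ring : N * (N ^ 8 * k) = N ^ 9 * k)]

theorem k_le_m (hR : AsymptoticRegime n k m L N) : (k : ℝ) ≤ m :=
  le_trans (le_mul_of_one_le_left (Nat.cast_nonneg k) (one_le_pow₀ (by linarith [hR.le_N])))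
    hR.pow_N_mul_k_le_m

theorem m_pos (hR : AsymptoticRegime n k m L N) : (0 : ℝ) < m := by
  linarith [hR.le_k, hR.k_le_m]

theorem m_le_exp (hR : AsymptoticRegime n k m L N) : (m : ℝ) ≤ exp L := by
  have hN := hR.le_N
  have : (m : ℝ) * 2 ≤ m * N := by gcongr; linarith
  linarith [hR.exp_L, hR.m_le, hR.n_pos]

theorem exp_half_sq (hR : AsymptoticRegime n k m L N) : exp (L / 2) ^ 2 = n := by
  rw [← exp_nat_mul, ← hR.exp_L]; congr 1; push_cast; ring

theorem exp_half_le_k (hR : AsymptoticRegime n k m L N) : exp (L / 2) ≤ k := by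
  refine (sq_le_sq₀ (exp_nonneg _) (Nat.cast_nonneg k)).1 ?_
  rw [hR.exp_half_sq]
  exact le_trans (by nlinarith [hR.n_pos, hR.le_L]) hR.le_sq_k

theorem k_le_exp_half_mul (hR : AsymptoticRegime n k m L N) : (k : ℝ) ≤ exp (L / 2) * N := by
  have hN := hR.le_N
  have hL : 1.6 * L ≤ N ^ 2 := by nlinarith [hR.L_le_N, hR.le_L]
  refine (sq_le_sq₀ (Nat.cast_nonneg k) (by positivity)).1 (hR.sq_k_le.trans ?_)
  rw [mul_pow, hR.exp_half_sq, mul_comm 1.6, mul_assoc]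
  gcongr

theorem exp_sub_mul_sq_N (hR : AsymptoticRegime n k m L N) :
    exp (0.4995 * L) * N ^ 2 = exp (L / 2) := by
  rw [← hR.exp_N, ← exp_nat_mul, ← exp_add]; congr 1; push_cast; ring

theorem exp_mul_k_le_m (hR : AsymptoticRegime n k m L N) : exp (0.4995 * L) * k ≤ m := by
  have hN : 0 < N := by linarith [hR.le_N]
  refine le_of_mul_le_mul_right ?_ hN
  calc exp (0.4995 * L) * k * N
      ≤ exp (0.4995 * L) * (exp (L / 2) * N) * N := by
        have := hR.k_le_exp_half_mul
        gcongr
    _ = (exp (0.4995 * L) * N ^ 2) * exp (L / 2) := by ring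
    _ = n := by rw [hR.exp_sub_mul_sq_N, ← sq, hR.exp_half_sq]
    _ ≤ m * N := hR.le_m

theorem le_exp_neg_of_mul_le (hR : AsymptoticRegime n k m L N) (hx : x * N ≤ 10 ^ 5 * L) :
    x ≤ exp (-(L / 8000)) := by
  have exp_sq : exp (L / 8000) ^ 2 = N := by
    rw [← exp_nat_mul, ← hR.exp_N]; congr 1; push_cast; ring
  have hL : 10 ^ 5 * L ≤ exp (L / 8000) := by
    refine (sq_le_sq₀ (by linarith [hR.le_L]) (exp_nonneg _)).1 ?_
    linarith [hR.sq_L_le_N, mul_pow (10 ^ 5) L 2]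
  refine le_of_mul_le_mul_right ?_ (show 0 < N by linarith [hR.le_N])
  calc x * N ≤ exp (L / 8000) := hx.trans hL
    _ = exp (-(L / 8000)) * N := by rw [← exp_sq, sq, ← mul_assoc, ← exp_add]; simp

theorem edgeProb_mul_k (hR : AsymptoticRegime n k m L N) : edgeProb k L * k = 0.6 * L :=
  div_mul_cancel₀ _ (by linarith [hR.le_k])

theorem edgeProb_mem_Icc (hR : AsymptoticRegime n k m L N) : edgeProb k L ∈ Set.Icc 0 1 := by
  have hL := hR.le_L
  have hN : N ≤ N ^ 10 := le_self_pow₀ (by linarith [hR.le_N]) (by norm_num)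
  refine ⟨div_nonneg (by linarith) (Nat.cast_nonneg k), div_le_one_of_le₀ ?_ (Nat.cast_nonneg k)⟩
  linarith [hR.L_le_N, hR.pow_N_le, hR.le_N]

theorem edgeProb_nonneg (hR : AsymptoticRegime n k m L N) : 0 ≤ edgeProb k L :=
  hR.edgeProb_mem_Icc.1

theorem edgeProb_le_exp (hR : AsymptoticRegime n k m L N) : edgeProb k L ≤ exp (-(0.4995 * L)) := by
  have hL := hR.le_L
  have hLN : 0.6 * L ≤ N ^ 2 := by nlinarith [hR.L_le_N]
  calc edgeProb k L ≤ 0.6 * L / exp (L / 2) := by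
        have := hR.exp_half_le_k
        unfold edgeProb
        gcongr
    _ ≤ N ^ 2 / exp (L / 2) := by gcongr
    _ = exp (-(0.4995 * L)) := by
        have := hR.le_N
        rw [← hR.exp_sub_mul_sq_N, exp_neg]
        field_simp

theorem le_m_mul_edgeProb (hR : AsymptoticRegime n k m L N) : 10 ^ 10 * L ≤ m * edgeProb k L := by
  have hL := hR.le_L
  have hN : N ≤ N ^ 8 := le_self_pow₀ (by linarith [hR.le_N]) (by norm_num)
  calc 10 ^ 10 * L ≤ N ^ 8 * (0.6 * L) := by nlinarith [hR.le_N]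
    _ = N ^ 8 * k * edgeProb k L := by rw [← hR.edgeProb_mul_k]; ring
    _ ≤ m * edgeProb k L := mul_le_mul_of_nonneg_right hR.pow_N_mul_k_le_m hR.edgeProb_nonneg

theorem m_mul_edgeProb_sq_mul_N_le (hR : AsymptoticRegime n k m L N) :
    m * edgeProb k L ^ 2 * N ≤ 0.25 * L := by
  have hL := hR.le_L
  have hk : (0 : ℝ) < k := by linarith [hR.le_k]
  have hk_sq := mul_le_mul_of_nonneg_left hR.le_sq_k (show 0 ≤ 0.25 * L by linarith)
  have : 0 ≤ L * n * L := by positivity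
  calc m * edgeProb k L ^ 2 * N = 0.36 * L * (m * N) * L / k ^ 2 := by
        unfold edgeProb; field_simp; norm_num; ring
    _ ≤ 0.36 * L * (1.001 * n) * L / k ^ 2 := by
        have := hR.m_le
        gcongr
    _ ≤ 0.25 * L := by
        rw [div_le_iff₀ (by positivity)]
        linarith

theorem n_mul_edgeProb_le (hR : AsymptoticRegime n k m L N) : n * edgeProb k L ≤ 0.4 * k := by
  calc n * edgeProb k L = 0.6 * L * n / k := by unfold edgeProb; ring
    _ ≤ 0.4 * k := by
        rw [div_le_iff₀ (by linarith [hR.le_k])]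
        linarith [hR.le_sq_k, sq (k : ℝ)]

theorem choose_le_exp (hR : AsymptoticRegime n k m L N) :
    (n.choose k : ℝ) ≤ exp (k * (1 + L / 2)) := by
  have hk : (0 : ℝ) < k := by linarith [hR.le_k]
  have div_le : (n : ℝ) / k ≤ exp (L / 2) := by
    rw [div_le_iff₀ hk, ← hR.exp_half_sq, sq]
    gcongr
    exact hR.exp_half_le_k
  calc (n.choose k : ℝ) ≤ (exp 1 * n / k) ^ k := choose_le_exp_one_mul_div_pow n k
    _ ≤ (exp 1 * exp (L / 2)) ^ k := by
        rw [mul_div_assoc]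
        gcongr
    _ = exp (k * (1 + L / 2)) := by rw [← exp_add, ← exp_nat_mul]

theorem choose_mul_le (hR : AsymptoticRegime n k m L N) {E : ℝ} (hx : x ≤ exp E)
    (hE : E ≤ -(2 * (k * L))) : (n.choose k : ℝ) * x ≤ 1 / 32 := by
  have hkL : 10 ^ 10 * k ≤ k * L := by rw [mul_comm]; gcongr; exact hR.le_L
  calc (n.choose k : ℝ) * x ≤ exp (k * (1 + L / 2)) * exp E :=
        mul_le_mul_of_nonneg hR.choose_le_exp hx (Nat.cast_nonneg _) (exp_nonneg _)
    _ = exp (k * (1 + L / 2) + E) := (exp_add _ _).symm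
    _ ≤ 1 / 32 := exp_le_one_div_thirtyTwo (by linarith [hR.le_k])

end AsymptoticRegime

end Regime

section Estimates

open Finset Real

/-- The thresholds in the asymptotic regime: the expected values, up to factors that are either
slightly larger than `1` or, for events far from the main term, chosen with room to spare. -/
noncomputable def regimeThresholds (k m : ℕ) (L N : ℝ) : Thresholds where
  fiber := ⌈1.015 * N⌉₊
  codegree := 23999
  degree := ⌈1.015 * (m * edgeProb k L)⌉₊
  centers := ⌈2 * N ^ 2⌉₊
  low := ⌈k / N ^ 2⌉₊
  packing := ⌊k * L / 10 ^ 5⌋₊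
  within := ⌈10 * (k * L)⌉₊
  spread := ⌈spreadDensity * k ^ 2⌉₊
  crossing := ⌈k * L / 8000⌉₊

namespace AsymptoticRegime

variable {L N : ℝ} {n k m : ℕ}

section Thresholds

theorem fiber_le (hR : AsymptoticRegime n k m L N) :
    ((regimeThresholds k m L N).fiber : ℝ) ≤ 1.02 * N := by
  have hN := hR.le_N
  exact (Nat.ceil_lt_add_one (by positivity)).le.trans (by linarith)

theorem degree_le (hR : AsymptoticRegime n k m L N) :
    ((regimeThresholds k m L N).degree : ℝ) ≤ 1.02 * (m * edgeProb k L) := by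
  have hL := hR.le_L
  have hmp := hR.le_m_mul_edgeProb
  exact (Nat.ceil_lt_add_one (by linarith)).le.trans (by linarith)

theorem centers_le (hR : AsymptoticRegime n k m L N) :
    ((regimeThresholds k m L N).centers : ℝ) ≤ 3 * N ^ 2 := by
  have hN : 1 ≤ N ^ 2 := one_le_pow₀ (by linarith [hR.le_N])
  exact (Nat.ceil_lt_add_one (by positivity)).le.trans (by linarith)

theorem k_le_low_mul (hR : AsymptoticRegime n k m L N) :
    k ≤ (regimeThresholds k m L N).low * N ^ 2 := by
  have hN := hR.le_N
  rw [← div_le_iff₀ (by positivity)]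
  exact Nat.le_ceil _

theorem low_mul_le (hR : AsymptoticRegime n k m L N) :
    (regimeThresholds k m L N).low * N ^ 2 ≤ 2 * k := by
  have hN := hR.le_N
  have hNk : N ^ 2 ≤ N ^ 10 := pow_le_pow_right₀ (by linarith) (by norm_num)
  calc (regimeThresholds k m L N).low * N ^ 2 ≤ (k / N ^ 2 + 1) * N ^ 2 := by
        gcongr
        exact (Nat.ceil_lt_add_one (by positivity)).le
    _ = k + N ^ 2 := by field_simp
    _ ≤ 2 * k := by linarith [hR.pow_N_le]

theorem ten_pow_le_mul (hR : AsymptoticRegime n k m L N) : 10 ^ 10 ≤ k * L := by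
  nlinarith [hR.le_L, hR.le_k]

theorem within_le (hR : AsymptoticRegime n k m L N) :
    ((regimeThresholds k m L N).within : ℝ) ≤ 11 * (k * L) := by
  have hkL := hR.ten_pow_le_mul
  exact (Nat.ceil_lt_add_one (by linarith)).le.trans (by linarith)

theorem crossing_le (hR : AsymptoticRegime n k m L N) :
    ((regimeThresholds k m L N).crossing : ℝ) ≤ k * L / 7000 := by
  have hkL := hR.ten_pow_le_mul
  exact (Nat.ceil_lt_add_one (by linarith)).le.trans (by linarith)

theorem packing_le (hR : AsymptoticRegime n k m L N) :
    ((regimeThresholds k m L N).packing : ℝ) ≤ k * L / 10 ^ 5 :=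
  Nat.floor_le (by linarith [hR.ten_pow_le_mul])

theorem N_le_spreadDensity_mul_k (hR : AsymptoticRegime n k m L N) :
    10 ^ 10 * N ≤ spreadDensity * k := by
  have hN : N ≤ N ^ 10 := le_self_pow₀ (by linarith [hR.le_N]) (by norm_num)
  linarith [hR.le_mul_k]

theorem spread_le (hR : AsymptoticRegime n k m L N) :
    ((regimeThresholds k m L N).spread : ℝ) ≤ 1.1 * (spreadDensity * k ^ 2) := by
  have hε := spreadDensity_pos
  have : 10 * 1 ≤ spreadDensity * k * k :=
    mul_le_mul (by linarith [hR.N_le_spreadDensity_mul_k, hR.le_N]) (by linarith [hR.le_k])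
      zero_le_one (by positivity)
  exact (Nat.ceil_lt_add_one (by positivity)).le.trans
    (by linarith [(by ring : spreadDensity * k * k = spreadDensity * k ^ 2)])

theorem lowPairs_le (hR : AsymptoticRegime n k m L N) :
    ((regimeThresholds k m L N).lowPairs k : ℝ) ≤ 2 * (spreadDensity * k ^ 2) := by
  have hL := hR.le_L
  have hN : 0 < N := by linarith [hR.le_N]
  have hF := hR.fiber_le
  have hwithin := hR.within_le
  have hlow := hR.low_mul_le
  have hspread := hR.spread_le
  set t := regimeThresholds k m L N
  have diagonal_le : (k : ℝ) * t.fiber ≤ 0.1 * (spreadDensity * k ^ 2) := by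
    calc (k : ℝ) * t.fiber ≤ k * (0.1 * (spreadDensity * k)) := by
          gcongr
          linarith [hR.N_le_spreadDensity_mul_k]
      _ = 0.1 * (spreadDensity * k ^ 2) := by ring
  have inside_le : (t.low : ℝ) * (t.fiber * (2 * t.within)) ≤ 0.1 * (spreadDensity * k ^ 2) := by
    refine le_of_mul_le_mul_right ?_ hN
    calc (t.low : ℝ) * (t.fiber * (2 * t.within)) * N
        ≤ t.low * (1.02 * N * (2 * (11 * (k * L)))) * N := by gcongr
      _ = (t.low * N ^ 2) * (22.44 * (k * L)) := by ring
      _ ≤ 2 * k * (22.44 * (k * L)) := by gcongr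
      _ = k ^ 2 * (44.88 * L) := by ring
      _ ≤ k ^ 2 * (0.1 * (spreadDensity * N)) :=
          mul_le_mul_of_nonneg_left (by linarith [hR.L_le_mul_N]) (sq_nonneg _)
      _ = 0.1 * (spreadDensity * k ^ 2) * N := by ring
  have : 0 ≤ spreadDensity * k ^ 2 := mul_nonneg spreadDensity_pos.le (sq_nonneg _)
  push_cast [Thresholds.lowPairs]
  linarith

theorem exceptional_le (hR : AsymptoticRegime n k m L N) :
    ((regimeThresholds k m L N).exceptional : ℝ) ≤ k / 10 ^ 4 := by
  have hN := hR.le_N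
  have hF := hR.fiber_le
  have hcenters := hR.centers_le
  push_cast [Thresholds.exceptional]
  calc _ ≤ 1.02 * N * (3 * N ^ 2 + (3 * N ^ 2) ^ 2 * 23999) := by
        gcongr
        norm_num [regimeThresholds]
    _ = 3.06 * N ^ 3 + 220310.82 * N ^ 5 := by ring
    _ ≤ 3.06 * N ^ 10 + 220310.82 * N ^ 10 := by
        gcongr <;> linarith
    _ ≤ k / 10 ^ 4 := by linarith [hR.pow_N_le, pow_nonneg (show 0 ≤ N by linarith) 10]

theorem perCenter_le (hR : AsymptoticRegime n k m L N) :
    ((regimeThresholds k m L N).perCenter : ℝ) ≤ 0.42 * k := by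
  have hN := hR.le_N
  have hF := hR.fiber_le
  have hd := hR.degree_le
  have hm := hR.m_le
  have hp := hR.edgeProb_nonneg
  push_cast [Thresholds.perCenter]
  calc _ ≤ 1.02 * N * (1.02 * (m * edgeProb k L)) := by gcongr
    _ = 1.0404 * ((m * N) * edgeProb k L) := by ring
    _ ≤ 1.0404 * ((1.001 * n) * edgeProb k L) := by gcongr
    _ ≤ 0.42 * k := by linarith [hR.n_mul_edgeProb_le]

theorem centers_lt (hR : AsymptoticRegime n k m L N) :
    let t := regimeThresholds k m L N
    k + (t.centers + 1) ^ 2 * (t.fiber * t.codegree) < (t.centers + 1) * t.low := by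
  intro t
  have hN := hR.le_N
  have hF : (t.fiber : ℝ) ≤ 1.02 * N := hR.fiber_le
  have hcenters : (t.centers : ℝ) + 1 ≤ 4 * N ^ 2 := by
    have : 1 ≤ N ^ 2 := one_le_pow₀ (by linarith)
    linarith [hR.centers_le]
  have overlap_lt : ((t.centers : ℝ) + 1) ^ 2 * (t.fiber * t.codegree) < k := by
    calc ((t.centers : ℝ) + 1) ^ 2 * (t.fiber * t.codegree)
        ≤ (4 * N ^ 2) ^ 2 * (1.02 * N * 23999) := by gcongr; norm_num [t, regimeThresholds]
      _ = 391663.68 * N ^ 5 := by ring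
      _ ≤ 391663.68 * N ^ 10 := by gcongr <;> linarith
      _ < k := by linarith [hR.pow_N_le, pow_pos (show 0 < N by linarith) 10]
  have le_total : 2 * (k : ℝ) ≤ (t.centers + 1) * t.low := by
    calc 2 * (k : ℝ) ≤ 2 * (t.low * N ^ 2) := by
          have : k ≤ t.low * N ^ 2 := hR.k_le_low_mul
          gcongr
      _ = 2 * N ^ 2 * t.low := by ring
      _ ≤ (t.centers + 1) * t.low := by
          gcongr
          exact (Nat.le_ceil _).trans (le_add_of_nonneg_right zero_le_one)
  rify
  linarith

theorem centers_le_m (hR : AsymptoticRegime n k m L N) :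
    (regimeThresholds k m L N).centers ≤ m := by
  have hN := hR.le_N
  have hNk : N ^ 2 ≤ N ^ 10 := pow_le_pow_right₀ (by linarith) (by norm_num)
  rify
  linarith [hR.centers_le, hR.pow_N_le, hR.k_le_m, pow_nonneg (show 0 ≤ N by linarith) 10]

end Thresholds

section Tails

theorem fiber_tail_le (hR : AsymptoticRegime n k m L N) :
    m * exp (-(0.02 * (regimeThresholds k m L N).fiber) + (exp 0.02 - 1) * n / m) ≤ 1 / 8 := by
  have hF : 1.015 * N ≤ (regimeThresholds k m L N).fiber := Nat.le_ceil _
  have mean_le : (exp 0.02 - 1) * n / m ≤ 0.02021 * N := by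
    rw [div_le_iff₀ hR.m_pos, mul_assoc, mul_comm N]
    exact mul_le_mul exp_two_hundredths_sub_one_le hR.le_m (Nat.cast_nonneg n) (by norm_num)
  set F := (regimeThresholds k m L N).fiber
  calc m * exp (-(0.02 * F) + (exp 0.02 - 1) * n / m)
      ≤ exp L * exp (-(0.02 * F) + (exp 0.02 - 1) * n / m) := by
        gcongr
        exact hR.m_le_exp
    _ = exp (L + (-(0.02 * F) + (exp 0.02 - 1) * n / m)) := (exp_add _ _).symm
    _ ≤ 1 / 32 := exp_le_one_div_thirtyTwo (by linarith [hR.le_L, hR.L_le_N])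
    _ ≤ 1 / 8 := by norm_num

theorem degree_tail_le (hR : AsymptoticRegime n k m L N) :
    m * exp (-(0.02 * (regimeThresholds k m L N).degree) + edgeProb k L * (exp 0.02 - 1) * m) ≤
      1 / 32 := by
  have hd : 1.015 * (m * edgeProb k L) ≤ (regimeThresholds k m L N).degree := Nat.le_ceil _
  set d := (regimeThresholds k m L N).degree
  set p := edgeProb k L
  have mean_le : (m * p) * (exp 0.02 - 1) ≤ (m * p) * 0.02021 :=
    mul_le_mul_of_nonneg_left exp_two_hundredths_sub_one_le
      (mul_nonneg (Nat.cast_nonneg m) hR.edgeProb_nonneg)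
  calc m * exp (-(0.02 * d) + p * (exp 0.02 - 1) * m)
      ≤ exp L * exp (-(0.02 * d) + p * (exp 0.02 - 1) * m) := by
        gcongr
        exact hR.m_le_exp
    _ = exp (L + (-(0.02 * d) + p * (exp 0.02 - 1) * m)) := (exp_add _ _).symm
    _ ≤ 1 / 32 := exp_le_one_div_thirtyTwo (by linarith [hR.le_L, hR.le_m_mul_edgeProb])

theorem codegree_tail_le (hR : AsymptoticRegime n k m L N) :
    (m : ℝ) ^ 2 * (m * edgeProb k L ^ 2) ^ ((regimeThresholds k m L N).codegree + 1) ≤ 1 / 32 := by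
  have mean_le : m * edgeProb k L ^ 2 ≤ exp (-(L / 8000)) :=
    hR.le_exp_neg_of_mul_le (by linarith [hR.m_mul_edgeProb_sq_mul_N_le, hR.le_L])
  calc (m : ℝ) ^ 2 * (m * edgeProb k L ^ 2) ^ 24000
      ≤ exp L ^ 2 * exp (-(L / 8000)) ^ 24000 := by
        gcongr
        exact hR.m_le_exp
    _ = exp (-L) := by rw [← exp_nat_mul, ← exp_nat_mul, ← exp_add]; ring_nf
    _ ≤ 1 / 32 := exp_le_one_div_thirtyTwo (by linarith [hR.le_L])

theorem packing_tail_le (hR : AsymptoticRegime n k m L N) {s : ℕ} (hs : k * L / 10 ^ 5 ≤ s) :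
    (n.choose k : ℝ) * (((k ^ 2 * m).choose s : ℝ) * edgeProb k L ^ (3 * s)) ≤ 1 / 32 := by
  have hL := hR.le_L
  have hkL := hR.ten_pow_le_mul
  have hp := hR.edgeProb_nonneg
  have hs₀ : (0 : ℝ) < s := by linarith
  set p := edgeProb k L
  have mean_le : exp 1 * (k ^ 2 * m : ℕ) / s * p ^ 3 ≤ exp (-(L / 8000)) := by
    refine hR.le_exp_neg_of_mul_le ?_
    calc exp 1 * (k ^ 2 * m : ℕ) / s * p ^ 3 * N
        = exp 1 * (k * (p * k) * (m * p ^ 2 * N)) / s := by push_cast; ring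
      _ ≤ 3 * (k * (0.6 * L) * (0.25 * L)) / s := by
          rw [hR.edgeProb_mul_k]
          have := hR.le_N
          have := hR.m_mul_edgeProb_sq_mul_N_le
          have : exp 1 ≤ 3 := by linarith [exp_one_lt_d9]
          gcongr
      _ ≤ 10 ^ 5 * L := by
          rw [div_le_iff₀ hs₀]
          nlinarith
  refine hR.choose_mul_le (E := s * (-(L / 8000))) ?_ (by nlinarith)
  calc ((k ^ 2 * m).choose s : ℝ) * p ^ (3 * s)
      ≤ (exp 1 * (k ^ 2 * m : ℕ) / s) ^ s * p ^ (3 * s) := by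
        gcongr
        exact choose_le_exp_one_mul_div_pow _ _
    _ = (exp 1 * (k ^ 2 * m : ℕ) / s * p ^ 3) ^ s := by rw [pow_mul, mul_pow]
    _ ≤ exp (-(L / 8000)) ^ s := by gcongr
    _ = exp (s * (-(L / 8000))) := (exp_nat_mul _ _).symm

theorem within_tail_le (hR : AsymptoticRegime n k m L N) :
    (n.choose k : ℝ) * exp (-(1 * (regimeThresholds k m L N).within) +
      edgeProb k L * (exp 1 - 1) * (k : ℝ) ^ 2) ≤ 1 / 32 := by
  have hwithin : 10 * (k * L) ≤ (regimeThresholds k m L N).within := Nat.le_ceil _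
  refine hR.choose_mul_le le_rfl ?_
  have mean_le : edgeProb k L * (exp 1 - 1) * (k : ℝ) ^ 2 ≤ 1.2 * (k * L) := by
    calc edgeProb k L * (exp 1 - 1) * (k : ℝ) ^ 2
        = edgeProb k L * k * k * (exp 1 - 1) := by ring
      _ = 0.6 * (k * L) * (exp 1 - 1) := by rw [hR.edgeProb_mul_k]; ring
      _ ≤ 0.6 * (k * L) * 2 := by
          have := hR.ten_pow_le_mul
          gcongr
          linarith [exp_one_lt_d9]
      _ = 1.2 * (k * L) := by ring
  linarith [hR.ten_pow_le_mul]

theorem spread_mean_le (hR : AsymptoticRegime n k m L N) :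
    m * (k ^ 2 * ((edgeProb k L * exp 1) ^ 2 *
      exp (2 * edgeProb k L * (1 / (regimeThresholds k m L N).fiber) * k))) ≤
      spreadDensity * k ^ 2 / 2 := by
  have hp := hR.edgeProb_nonneg
  have hN := hR.le_N
  have hF : 1.015 * N ≤ (regimeThresholds k m L N).fiber := Nat.le_ceil _
  have hF₀ : (0 : ℝ) < (regimeThresholds k m L N).fiber := by linarith
  set F := (regimeThresholds k m L N).fiber
  set p := edgeProb k L
  have exp_one_le : exp 1 ≤ 3 := by linarith [exp_one_lt_d9]
  have exponent_le : 2 * p * (1 / F) * k ≤ 1 := by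
    calc 2 * p * (1 / F) * k = 2 * (p * k) / F := by ring
      _ ≤ 1 := by
          rw [hR.edgeProb_mul_k, div_le_one hF₀]
          linarith [hR.L_le_N, hR.le_L]
  have codegree_le : m * p ^ 2 ≤ spreadDensity / 54 := by
    refine le_of_mul_le_mul_right ?_ (show 0 < N by linarith)
    linarith [hR.m_mul_edgeProb_sq_mul_N_le, hR.L_le_mul_N, hR.le_L]
  calc m * (k ^ 2 * ((p * exp 1) ^ 2 * exp (2 * p * (1 / F) * k)))
      ≤ m * (k ^ 2 * ((p * 3) ^ 2 * 3)) := by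
        gcongr
        exact (exp_le_exp.2 exponent_le).trans exp_one_le
    _ = (m * p ^ 2) * (27 * k ^ 2) := by ring
    _ ≤ spreadDensity / 54 * (27 * k ^ 2) := by gcongr
    _ = spreadDensity * k ^ 2 / 2 := by ring

theorem spread_tail_le (hR : AsymptoticRegime n k m L N) {l : ℝ}
    (hl : l * ((regimeThresholds k m L N).fiber * (regimeThresholds k m L N).low) = 1) :
    (n.choose k : ℝ) * exp (-(l * (regimeThresholds k m L N).spread) + l * (m * (k ^ 2 *
      ((edgeProb k L * exp 1) ^ 2 *
        exp (2 * edgeProb k L * (1 / (regimeThresholds k m L N).fiber) * k))))) ≤ 1 / 32 := by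
  have hL := hR.le_L
  have hN : 0 < N := by linarith [hR.le_N]
  have hmean := hR.spread_mean_le
  have hspread : spreadDensity * k ^ 2 ≤ (regimeThresholds k m L N).spread := Nat.le_ceil _
  have hF := hR.fiber_le
  have hlow := hR.low_mul_le
  set t := regimeThresholds k m L N
  have hl₀ : 0 ≤ l := by
    by_contra! hneg
    have : l * (t.fiber * t.low) ≤ 0 := mul_nonpos_of_nonpos_of_nonneg hneg.le (by positivity)
    linarith
  have fiber_mul_low_le : (t.fiber : ℝ) * t.low * N ≤ 2.04 * k := by
    calc (t.fiber : ℝ) * t.low * N ≤ 1.02 * N * t.low * N := by gcongr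
      _ = 1.02 * (t.low * N ^ 2) := by ring
      _ ≤ 1.02 * (2 * k) := by gcongr
      _ = 2.04 * k := by ring
  have exponent_le : 2 * (k * L) ≤ l * (spreadDensity * k ^ 2 / 2) := by
    refine le_of_mul_le_mul_right ?_ hN
    calc 2 * (k * L) * N = l * (2 * (k * L) * (t.fiber * t.low * N)) := by
          linear_combination (-2 * (k * L) * N) * hl
      _ ≤ l * (2 * (k * L) * (2.04 * k)) := by gcongr
      _ = l * (k ^ 2 / 2 * (8.16 * L)) := by ring
      _ ≤ l * (k ^ 2 / 2 * (spreadDensity * N)) := by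
          refine mul_le_mul_of_nonneg_left (mul_le_mul_of_nonneg_left ?_ (by positivity)) hl₀
          linarith [hR.L_le_mul_N]
      _ = l * (spreadDensity * k ^ 2 / 2) * N := by ring
  refine hR.choose_mul_le le_rfl ?_
  have := mul_le_mul_of_nonneg_left hmean hl₀
  have := mul_le_mul_of_nonneg_left hspread hl₀
  linarith

theorem crossing_tail_le (hR : AsymptoticRegime n k m L N) :
    (n.choose k : ℝ) * exp (-(20000 * (regimeThresholds k m L N).crossing) +
      edgeProb k L * (exp 20000 - 1) * (regimeThresholds k m L N).lowPairs k) ≤ 1 / 32 := by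
  have hkL := hR.ten_pow_le_mul
  have hp := hR.edgeProb_nonneg
  have hcrossing : k * L / 8000 ≤ (regimeThresholds k m L N).crossing := Nat.le_ceil _
  refine hR.choose_mul_le le_rfl ?_
  have mean_le : edgeProb k L * (exp 20000 - 1) * (regimeThresholds k m L N).lowPairs k ≤
      0.3 * (k * L) := by
    calc _ ≤ edgeProb k L * exp 20000 * (2 * (spreadDensity * k ^ 2)) := by
          gcongr
          · exact sub_le_self _ zero_le_one
          · exact hR.lowPairs_le
      _ = 2 * (edgeProb k L * k) * k * (exp 20000 * spreadDensity) := by ring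
      _ = 0.3 * (k * L) := by rw [exp_mul_spreadDensity, hR.edgeProb_mul_k]; ring
  linarith

end Tails

section Certificate

theorem certificate_exponent_le (hR : AsymptoticRegime n k m L N) :
    0.505 * (k * L) + 2 * (4 * (regimeThresholds k m L N).openEdges) +
      4 * (regimeThresholds k m L N).exceptional * (0.4995 * L) + 0.98 * (L / 2) * k +
      edgeProb k L * (1 - exp (-4)) * k ≤ 2 * (0.4995 * L) * k := by
  have hL := hR.le_L
  have edge_le : edgeProb k L * (1 - exp (-4)) * k ≤ 0.6 * L := by
    rw [mul_right_comm, hR.edgeProb_mul_k]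
    exact mul_le_of_le_one_right (by positivity) (sub_le_self _ (exp_nonneg _))
  have exceptional_le : (regimeThresholds k m L N).exceptional * (0.4995 * L) ≤
      k / 10 ^ 4 * (0.4995 * L) := by
    gcongr
    exact hR.exceptional_le
  have hkL : 10 ^ 10 * L ≤ k * L := by gcongr; exact hR.le_k
  push_cast [Thresholds.openEdges]
  linarith [hR.packing_le, hR.crossing_le]

theorem le_edgeProb_mul (hR : AsymptoticRegime n k m L N) :
    1.17 * (L / 2) ≤ edgeProb k L * (1 - exp (-4)) * k := by
  rw [mul_right_comm, hR.edgeProb_mul_k]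
  nlinarith [exp_neg_four_le, hR.le_L]

theorem certificate_union_bound_le (hR : AsymptoticRegime n k m L N) :
    ((m : ℝ) ^ (regimeThresholds k m L N).centers *
      ((regimeThresholds k m L N).centers + 2) ^ k) ^ 2 *
      (2 * (4 ^ k * n.choose k) * exp (-(0.505 * (k * L)))) ≤ 1 / 4 := by
  have hL := hR.le_L
  have hN := hR.le_N
  have hcenters := hR.centers_le
  set ζ := (regimeThresholds k m L N).centers
  have hζ : (ζ : ℝ) + 2 ≤ exp (3 * (L / 4000)) := by
    calc (ζ : ℝ) + 2 ≤ N ^ 3 := by nlinarith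
      _ = exp (3 * (L / 4000)) := by rw [← hR.exp_N, ← exp_nat_mul]; norm_num
  have hζL : (ζ : ℝ) * L ≤ k / 10 ^ 4 * L := by
    have : N ^ 2 ≤ N ^ 10 := pow_le_pow_right₀ (by linarith) (by norm_num)
    gcongr
    linarith [hR.pow_N_le]
  have two_le : (2 : ℝ) ≤ exp 1 := by linarith [exp_one_gt_d9]
  have four_le : (4 : ℝ) ≤ exp 2 := by
    calc (4 : ℝ) ≤ exp 1 ^ 2 := by nlinarith
      _ = exp 2 := by rw [← exp_nat_mul]; norm_num
  calc _ ≤ (exp L ^ ζ * exp (3 * (L / 4000)) ^ k) ^ 2 *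
        (exp 1 * (exp 2 ^ k * exp (k * (1 + L / 2))) * exp (-(0.505 * (k * L)))) := by
        gcongr
        · exact hR.m_le_exp
        · exact hR.choose_le_exp
    _ = exp (2 * (ζ * L + k * (3 * (L / 4000))) + (1 + (k * 2 + k * (1 + L / 2)) +
          -(0.505 * (k * L)))) := by
        simp only [← exp_nat_mul, ← exp_add, Nat.cast_ofNat]
    _ ≤ 1 / 32 := by
        have : (10 : ℝ) ^ 10 * k ≤ L * k := by gcongr
        exact exp_le_one_div_thirtyTwo (by linarith [hR.le_k])
    _ ≤ 1 / 4 := by norm_num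

end Certificate

end AsymptoticRegime

end Estimates

section Conclusion

open Finset Real

namespace AsymptoticRegime

section Existence

variable {L N : ℝ} {n k m : ℕ} {a b : Fin n → Fin m}

theorem pairProb_exists_hasCertificate_le (hR : AsymptoticRegime n k m L N)
    (hdefect : ∑ I ∈ powersetCard k univ, exp (0.4995 * L) ^ (imageDefect a I + imageDefect b I) ≤
      2 * (4 ^ k * n.choose k)) :
    pairProb (edgeProb k L) (fun S₁ S₂ => ∃ I ∈ powersetCard k univ,
      HasCertificate a b I (regimeThresholds k m L N) S₁ S₂) ≤ 1 / 4 := by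
  have hL := hR.le_L
  have hk : 0 < k := by rify; linarith [hR.le_k]
  set t := regimeThresholds k m L N
  set A : ℝ := ((m : ℝ) ^ t.centers * (t.centers + 2) ^ k) ^ 2
  have certificate_le : ∀ I ∈ powersetCard k univ,
      pairProb (edgeProb k L) (HasCertificate a b I t) ≤
        A * (exp (0.4995 * L) ^ (imageDefect a I + imageDefect b I) *
          exp (-(0.505 * (k * L)))) := by
    intro I hI
    obtain rfl := (mem_powersetCard.1 hI).2
    simpa only [Fintype.card_fin] using pairProb_hasCertificate_le (a := a) (b := b)
      hR.edgeProb_mem_Icc hk hR.perCenter_le (by norm_num) hR.edgeProb_le_exp (by linarith)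
      (by linarith) hR.le_edgeProb_mul hR.certificate_exponent_le
  calc _ ≤ ∑ I ∈ powersetCard k univ, pairProb (edgeProb k L) (HasCertificate a b I t) :=
        pairProb_exists_le hR.edgeProb_mem_Icc _ _
    _ ≤ ∑ I ∈ powersetCard k univ, A * (exp (0.4995 * L) ^ (imageDefect a I + imageDefect b I) *
          exp (-(0.505 * (k * L)))) := sum_le_sum certificate_le
    _ = A * ((∑ I ∈ powersetCard k univ, exp (0.4995 * L) ^ (imageDefect a I + imageDefect b I)) *
          exp (-(0.505 * (k * L)))) := by rw [sum_mul, mul_sum]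
    _ ≤ A * (2 * (4 ^ k * n.choose k) * exp (-(0.505 * (k * L)))) := by gcongr
    _ ≤ 1 / 4 := hR.certificate_union_bound_le

theorem pairProb_exists_isAtypical_le (hR : AsymptoticRegime n k m L N)
    (hFb : ∀ x, #{v | b v = x} ≤ (regimeThresholds k m L N).fiber) :
    pairProb (edgeProb k L) (fun S₁ S₂ => ∃ I ∈ powersetCard k univ,
      IsAtypical a b I (regimeThresholds k m L N) S₁ S₂) ≤ 1 / 8 := by
  have hN := hR.le_N
  have hk := hR.le_k
  have hlow := hR.k_le_low_mul
  have hF : 1.015 * N ≤ (regimeThresholds k m L N).fiber := Nat.le_ceil _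
  have hpacking : k * L / 10 ^ 5 ≤ ((regimeThresholds k m L N).packing + 1 : ℕ) := by
    rw [Nat.cast_add_one]
    exact (Nat.lt_floor_add_one _).le
  set t := regimeThresholds k m L N with ht
  have hF₀ : (0 : ℝ) < t.fiber := by linarith
  have hlow₀ : (0 : ℝ) < t.low := pos_of_mul_pos_left (by linarith) (sq_nonneg N)
  have hl₀ : 1 / (t.fiber * t.low : ℝ) * (t.fiber * t.low) = 1 :=
    one_div_mul_cancel (mul_pos hF₀ hlow₀).ne'
  have atypical_le : ∀ I, #I = k →
      pairProb (edgeProb k L) (IsAtypical a b I t) ≤ 1 / 8 / n.choose k := by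
    rintro I rfl
    have choose_pos : (0 : ℝ) < n.choose #I :=
      Nat.cast_pos.2 (Nat.choose_pos ((card_le_univ I).trans_eq (Fintype.card_fin n)))
    have union_bound := mul_le_mul_of_nonneg_left (pairProb_isAtypical_le (a := a)
      hR.edgeProb_mem_Icc
      (fun x => (card_le_card (filter_subset_filter _ (subset_univ I))).trans (hFb x))
      (μ := 1 / t.fiber) (l₀ := 1 / (t.fiber * t.low)) (l₁ := 1) (l₂ := 20000) (by positivity)
      zero_le_one (by norm_num) (by field_simp; rfl) (one_div_mul_cancel hF₀.ne').le)
      choose_pos.le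
    rw [Fintype.card_fin] at union_bound
    rw [le_div_iff₀' choose_pos]
    linarith [hR.packing_tail_le hpacking, hR.within_tail_le, hR.spread_tail_le hl₀,
      hR.crossing_tail_le]
  refine (pairProb_exists_powersetCard_le hR.edgeProb_mem_Icc atypical_le).trans ?_
  rw [Fintype.card_fin]
  rw [mul_div_left_comm]
  exact mul_le_of_le_one_right (by norm_num) (div_self_le_one _)

theorem bernProb_isIrregular_regimeThresholds_le (hR : AsymptoticRegime n k m L N) :
    bernProb (edgeProb k L)
      (fun S : Finset (Sym2 (Fin m)) => IsIrregular (regimeThresholds k m L N) S) ≤ 1 / 8 := by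
  refine (bernProb_isIrregular_le hR.edgeProb_mem_Icc (l := 0.02) (by norm_num)).trans ?_
  rw [Fintype.card_fin]
  linarith [hR.codegree_tail_le, hR.degree_tail_le]

theorem exists_cliqueFree (hR : AsymptoticRegime n k m L N) :
    ∃ G : SimpleGraph (Fin n), G.CliqueFree 3 ∧
      ∀ I : Finset (Fin n), #I = k → ¬ G.IsIndepSet I := by
  have : Nonempty (Fin m) := Fin.pos_iff_nonempty.1 (Nat.cast_pos.1 hR.m_pos)
  obtain ⟨a, b, hFa, hFb, hdefect⟩ := exists_maps_small_fiber_sum_pow_imageDefect_le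
    (V := Fin n) (X := Fin m) (exp_nonneg (0.4995 * L))
    (by simpa only [Fintype.card_fin] using hR.exp_mul_k_le_m) (t := 0.02) (by norm_num)
    (by simpa only [Fintype.card_fin] using hR.fiber_tail_le)
  simp only [Nat.cast_le] at hFa hFb
  rw [Fintype.card_fin] at hdefect
  exact exists_cliqueFree_of_pairProb_le hR.edgeProb_mem_Icc hFa hFb hR.centers_lt
    (by simpa only [Fintype.card_fin] using hR.centers_le_m)
    (hR.pairProb_exists_hasCertificate_le hdefect) (hR.pairProb_exists_isAtypical_le hFb)
    (hR.pairProb_exists_isAtypical_le hFa) hR.bernProb_isIrregular_regimeThresholds_le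

end Existence

theorem of_exp_eq {n : ℕ} {L : ℝ} (exp_L : exp L = n) (le_L : 10 ^ 10 ≤ L)
    (le_exp : 10 ^ 10 * L ^ 2 ≤ spreadDensity * exp (L / 4000)) :
    AsymptoticRegime n ⌈√(3 / 2 * n * L)⌉₊ ⌈n / exp (L / 4000)⌉₊ L (exp (L / 4000)) := by
  have n_pos : (0 : ℝ) < n := exp_L ▸ exp_pos L
  have n_mul_L_nonneg : 0 ≤ 3 / 2 * n * L := by positivity
  have sqrt_sq : √(3 / 2 * n * L) ^ 2 = 3 / 2 * n * L := sq_sqrt n_mul_L_nonneg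
  have exp_half_sq : exp (L / 2) ^ 2 = n := by
    rw [← exp_nat_mul, ← exp_L]; congr 1; push_cast; ring
  have exp_half_le : exp (L / 2) ≤ √(3 / 2 * n * L) :=
    le_sqrt_of_sq_le (by rw [exp_half_sq]; nlinarith)
  have le_exp_half : L ≤ exp (L / 2) := by
    linarith [quadratic_le_exp_of_nonneg (show 0 ≤ L / 2 by linarith), sq_nonneg (L / 2 - 1)]
  have le_ceil := Nat.le_ceil √(3 / 2 * n * L)
  have ceil_le := (Nat.ceil_lt_add_one (sqrt_nonneg (3 / 2 * n * L))).le
  refine ⟨exp_L, rfl, le_L, le_exp, ?_, ?_, ?_, ?_, ?_⟩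
  · have const_le : 10 ^ 10 ≤ spreadDensity * exp (L / 4000) := le_trans (by nlinarith) le_exp
    have hε := spreadDensity_pos
    calc 10 ^ 10 * exp (L / 4000) ^ 10
        ≤ spreadDensity * exp (L / 4000) * exp (L / 4000) ^ 10 := by gcongr
      _ = spreadDensity * exp (11 * (L / 4000)) := by
          rw [mul_assoc, ← pow_succ', ← exp_nat_mul]; norm_num
      _ ≤ spreadDensity * exp (L / 2) := by gcongr; linarith
      _ ≤ spreadDensity * ⌈√(3 / 2 * n * L)⌉₊ := by gcongr; exact exp_half_le.trans le_ceil
  · calc 1.5 * n * L = √(3 / 2 * n * L) ^ 2 := by rw [sqrt_sq]; norm_num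
      _ ≤ (⌈√(3 / 2 * n * L)⌉₊ : ℝ) ^ 2 := by gcongr
  · calc (⌈√(3 / 2 * n * L)⌉₊ : ℝ) ^ 2 ≤ (√(3 / 2 * n * L) + 1) ^ 2 := by gcongr
      _ ≤ 16 / 15 * √(3 / 2 * n * L) ^ 2 := by nlinarith
      _ = 1.6 * n * L := by rw [sqrt_sq]; ring
  · rw [← div_le_iff₀ (exp_pos _)]
    exact Nat.le_ceil _
  · have exp_le_n : 1000 * exp (L / 4000) ≤ n := by
      have : exp (L / 4000) ≤ exp (L / 2) := exp_le_exp.2 (by linarith)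
      nlinarith
    calc (⌈n / exp (L / 4000)⌉₊ : ℝ) * exp (L / 4000)
        ≤ (n / exp (L / 4000) + 1) * exp (L / 4000) := by
          gcongr
          exact (Nat.ceil_lt_add_one (by positivity)).le
      _ = n + exp (L / 4000) := by field_simp
      _ ≤ 1.001 * n := by linarith

theorem eventually : ∀ᶠ n : ℕ in Filter.atTop,
    AsymptoticRegime n ⌈√(3 / 2 * n * log n)⌉₊ ⌈n / exp (log n / 4000)⌉₊ (log n)
      (exp (log n / 4000)) := by
  have log_tendsto : Filter.Tendsto (fun n : ℕ => log n) Filter.atTop Filter.atTop :=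
    tendsto_log_atTop.comp tendsto_natCast_atTop_atTop
  have exp_div_sq_large := ((tendsto_exp_div_pow_atTop 2).comp
    (log_tendsto.atTop_div_const (show (0 : ℝ) < 4000 by norm_num))).eventually_ge_atTop
      (10 ^ 10 * 4000 ^ 2 / spreadDensity)
  filter_upwards [log_tendsto.eventually_ge_atTop (10 ^ 10), exp_div_sq_large,
    Filter.eventually_gt_atTop 0] with n log_ge exp_div_ge n_pos
  refine of_exp_eq (exp_log (Nat.cast_pos.2 n_pos)) log_ge ?_
  have log_pos : 0 < log n := by linarith
  rw [Function.comp_apply, div_le_div_iff₀ spreadDensity_pos (by positivity)] at exp_div_ge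
  linarith

end AsymptoticRegime

end Conclusion

theorem triangle_free_with_small_independence_number_general :
    ∀ᶠ n : ℕ in Filter.atTop, ∃ G : SimpleGraph (Fin n), G.CliqueFree 3 ∧
      ∀ s : Finset (Fin n), G.IsIndepSet s → (s.card : ℝ) < √(3 / 2 * n * Real.log n) := by
  filter_upwards [AsymptoticRegime.eventually] with n hR
  obtain ⟨G, hG, hindep⟩ := hR.exists_cliqueFree
  refine ⟨G, hG, fun s hs => Nat.lt_ceil.1 ?_⟩
  by_contra! hle
  obtain ⟨I, hIs, hI⟩ := Finset.exists_subset_card_eq hle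
  exact hindep I hI (hs.mono (Finset.coe_subset.2 hIs))

/-- **Main technical theorem (Theorem 3.1 of the paper).**
For every `δ ∈ (0, 1/8)` and all sufficiently large `n` there is a triangle-free graph
on `n` vertices whose independence number is less than `(1+δ)·√((3/2)·n·log n)`. -/
theorem triangle_free_with_small_independence_number :
    ∀ δ : ℝ, 0 < δ → δ < 1 / 8 →
      ∃ n₀ : ℕ, ∀ n : ℕ, n₀ ≤ n →
        ∃ G : SimpleGraph (Fin n),
          G.CliqueFree 3 ∧
          ∀ s : Finset (Fin n),
            (∀ x ∈ s, ∀ y ∈ s, x ≠ y → ¬ G.Adj x y) →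
            (s.card : ℝ) < (1 + δ) * Real.sqrt ((3 / 2) * n * Real.log n) := by
  intro δ hδ _
  obtain ⟨n₀, hn₀⟩ :=
    Filter.eventually_atTop.1 triangle_free_with_small_independence_number_general
  refine ⟨n₀, fun n hn => ?_⟩
  obtain ⟨G, hG, hindep⟩ := hn₀ n hn
  exact ⟨G, hG, fun s hs => (hindep s fun x hx y hy => hs x hx y hy).trans_le
    (le_mul_of_one_le_left (Real.sqrt_nonneg _) (le_add_of_nonneg_right hδ.le))⟩
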